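/- arXiv:1710.01181 — 3 statements merged into one kernel-verified Lean document; each statement's English description precedes it below -/
import Mathlib

section
/- Let f(x;a) = b3(a)x³ + b2(a)x² + b1(a)x + b0(a) be a real cubic polynomial whose coefficients b0, b1, b2, b3 are continuously differentiable in a on a bounded closed set Π ⊂ ℝ. Suppose there are positive constants c6, c7, c8, C and exponents ι, β, κ with ε ≤ ε0^ι, β < (4/3)ι, κ < β + (4/3)ι, such that |‖b0|‖_Π ≤ C ε⁴, |‖b1|‖_Π ≤ C ε0^κ, inf_{a∈Π} |b1(a)| ≥ c6 ε0^κ, |‖b2|‖_Π ≤ C ε0^β, |‖b3|‖_Π ≤ c7, and inf_{a∈Π} |b3(a)| ≥ c8. Then, for ε0 sufficiently small, the equation f(x;a) = 0 has a real root x0(a) which is continuously differentiable in a ∈ Π and satisfies |‖x0|‖_Π ≤ c9 ε^{4/3} for a positive constant c9 (i.e. sup_{a∈Π} |x0(a)| ≤ c9 ε^{4/3} and sup_{a∈Π} |dx0/da| ≤ c9 ε^{4/3}). -/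
open Real

/-!
The coefficient scale `|b₀| ≲ ε⁴` suggests looking for the root in `(-δ, δ)` with `δ = ε ^ (4 / 3)`,
so that `ε⁴ = δ³`. The conditions on the exponents make the constant, quadratic and cubic terms
negligible there compared with the linear term `b₁ x`, of size `ε₀ ^ κ δ`. Hence the cubic changes
sign between `-δ` and `δ`, while its slope stays at least `c₆ ε₀ ^ κ / 2` in absolute value. The
root in `(-δ, δ)` therefore exists and is unique, and uniqueness identifies it with the local
solutions provided by the implicit function theorem, so it is as smooth as the coefficients.
Differentiating the equation gives the slope times `x₀'` as a sum of terms `bᵢ' x₀ ^ i`, all of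
size at most `ε₀ ^ κ δ`, and dividing by the slope gives `|x₀'| ≲ δ`.
-/

open Set Filter Topology
open scoped ContDiff

section ImplicitRoot

theorem injOn_of_deriv_ne_zero {f : ℝ → ℝ} {s : Set ℝ} (hs : s.OrdConnected)
    (hf : ∀ x ∈ s, deriv f x ≠ 0) : s.InjOn f := by
  have no_collision {x y : ℝ} (hx : x ∈ s) (hy : y ∈ s) (hlt : x < y) : f x ≠ f y := by
    intro hxy
    have hsub : Icc x y ⊆ s := hs.out hx hy
    have hcont : ContinuousOn f (Icc x y) := fun z hz =>
      (differentiableAt_of_deriv_ne_zero (hf z (hsub hz))).continuousAt.continuousWithinAt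
    obtain ⟨z, hz, hz0⟩ := exists_deriv_eq_zero hlt hcont hxy
    exact hf z (hsub (Ioo_subset_Icc_self hz)) hz0
  intro x hx y hy hxy
  by_contra hne
  exact (Ne.lt_or_gt hne).elim (no_collision hx hy · hxy) (no_collision hy hx · hxy.symm)

theorem exists_mem_Ioo_eq_zero_of_mul_neg {f : ℝ → ℝ} {l r : ℝ} (hlr : l ≤ r)
    (hf : ContinuousOn f (Icc l r)) (h : f l * f r < 0) : ∃ x ∈ Ioo l r, f x = 0 := by
  rcases mul_neg_iff.1 h with ⟨hl, hr⟩ | ⟨hl, hr⟩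
  · exact intermediate_value_Ioo' hlr hf ⟨hr, hl⟩
  · exact intermediate_value_Ioo hlr hf ⟨hl, hr⟩

variable {E : Type*} [NormedAddCommGroup E] [NormedSpace ℝ E] [CompleteSpace E]
  {F : E × ℝ → ℝ} {n : ℕ∞ω}

theorem exists_contDiffAt_implicit_of_deriv_ne_zero {a : E} {x : ℝ} (hF : ContDiffAt ℝ n F (a, x))
    (hn : n ≠ 0) (hx : deriv (fun y => F (a, y)) x ≠ 0) :
    ∃ φ : E → ℝ, ContDiffAt ℝ n φ a ∧ φ a = x ∧ ∀ᶠ b in 𝓝 a, F (b, φ b) = F (a, x) := by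
  have hslice : (fderiv ℝ F (a, x)) (0, 1) = deriv (fun y => F (a, y)) x :=
    ((hF.differentiableAt hn).hasFDerivAt.comp_hasDerivAt x
      ((hasDerivAt_const x a).prodMk (hasDerivAt_id x))).deriv.symm
  have hinv : (fderiv ℝ F (a, x) ∘L .inr ℝ E ℝ).IsInvertible := by
    refine ⟨ContinuousLinearEquiv.unitsEquivAut ℝ (Units.mk0 _ hx), ?_⟩
    ext
    simp [hslice]
  exact ⟨hF.implicitFunction hn hinv, hF.contDiffAt_implicitFunction hn hinv,
    hF.implicitFunction_apply_self hn hinv, hF.eventually_apply_implicitFunction hn hinv⟩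

theorem contDiffOn_root_of_deriv_ne_zero {U : Set E} {s : Set ℝ} {x₀ : E → ℝ} (hU : IsOpen U)
    (hs : IsOpen s) (hs' : s.OrdConnected) (hn : n ≠ 0) (hF : ContDiffOn ℝ n F (U ×ˢ s))
    (hderiv : ∀ a ∈ U, ∀ x ∈ s, deriv (fun y => F (a, y)) x ≠ 0)
    (hmem : ∀ a ∈ U, x₀ a ∈ s) (hroot : ∀ a ∈ U, F (a, x₀ a) = 0) :
    ContDiffOn ℝ n x₀ U := by
  intro a ha
  have hFa : ContDiffAt ℝ n F (a, x₀ a) :=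
    hF.contDiffAt ((hU.prod hs).mem_nhds ⟨ha, hmem a ha⟩)
  obtain ⟨φ, hφ, hφa, hFφ⟩ :=
    exists_contDiffAt_implicit_of_deriv_ne_zero hFa hn (hderiv a ha _ (hmem a ha))
  have hφs : ∀ᶠ b in 𝓝 a, φ b ∈ s :=
    hφ.continuousAt.eventually_mem (hs.mem_nhds (hφa ▸ hmem a ha))
  have heq : x₀ =ᶠ[𝓝 a] φ := by
    filter_upwards [hFφ, hφs, hU.mem_nhds ha] with b hFb hbs hb
    refine injOn_of_deriv_ne_zero hs' (hderiv b hb) (hmem b hb) hbs ?_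
    rw [hroot b hb, hFb, hroot a ha]
  exact (hφ.congr_of_eventuallyEq heq).contDiffWithinAt

end ImplicitRoot

section RealCubic

variable {p₀ p₁ p₂ p₃ x δ : ℝ}

theorem exists_cubic_root_mem_Ioo (hδ : 0 < δ)
    (h : |p₀| + |p₂| * δ ^ 2 + |p₃| * δ ^ 3 < |p₁| * δ) :
    ∃ x ∈ Ioo (-δ) δ, p₃ * x ^ 3 + p₂ * x ^ 2 + p₁ * x + p₀ = 0 := by
  -- The odd part dominates the even part at `δ`, so the values at `±δ` have opposite signs.
  have hdom : |p₂ * δ ^ 2 + p₀| < |p₃ * δ ^ 3 + p₁ * δ| := by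
    have heven := abs_add_le (p₂ * δ ^ 2) p₀
    have hodd := abs_sub_abs_le_abs_add (p₁ * δ) (p₃ * δ ^ 3)
    simp only [abs_mul, abs_pow, abs_of_pos hδ] at heven hodd
    rw [add_comm (p₃ * δ ^ 3)]
    linarith
  refine exists_mem_Ioo_eq_zero_of_mul_neg (by linarith) (by fun_prop) ?_
  linear_combination sq_lt_sq.2 hdom

theorem deriv_cubic (p₀ p₁ p₂ p₃ x : ℝ) :
    deriv (fun y => p₃ * y ^ 3 + p₂ * y ^ 2 + p₁ * y + p₀) x
      = p₁ + 2 * p₂ * x + 3 * p₃ * x ^ 2 := by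
  have h := ((((hasDerivAt_pow 3 x).const_mul p₃).add ((hasDerivAt_pow 2 x).const_mul p₂)).add
    ((hasDerivAt_id x).const_mul p₁)).add_const p₀
  refine h.deriv.trans ?_
  push_cast
  ring

theorem sub_le_abs_deriv_cubic (hx : |x| ≤ δ) :
    |p₁| - 2 * |p₂| * δ - 3 * |p₃| * δ ^ 2 ≤ |p₁ + 2 * p₂ * x + 3 * p₃ * x ^ 2| := by
  have htri := abs_sub_abs_le_abs_add p₁ (2 * p₂ * x + 3 * p₃ * x ^ 2)
  have htail : |2 * p₂ * x + 3 * p₃ * x ^ 2| ≤ 2 * |p₂| * δ + 3 * |p₃| * δ ^ 2 := by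
    refine (abs_add_le _ _).trans ?_
    simp only [abs_mul, abs_pow, Nat.abs_ofNat]
    gcongr
  rw [← add_assoc] at htri
  linarith

theorem half_le_abs_deriv_cubic {m : ℝ} (hδ : 0 < δ) (hx : |x| ≤ δ) (hm : m ≤ |p₁|)
    (h : |p₀| + 2 * |p₂| * δ ^ 2 + 3 * |p₃| * δ ^ 3 ≤ m / 2 * δ) :
    m / 2 ≤ |p₁ + 2 * p₂ * x + 3 * p₃ * x ^ 2| := by
  have htail : 2 * |p₂| * δ + 3 * |p₃| * δ ^ 2 ≤ m / 2 :=
    le_of_mul_le_mul_right (by linarith [abs_nonneg p₀]) hδ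
  linarith [sub_le_abs_deriv_cubic hx (p₁ := p₁) (p₂ := p₂) (p₃ := p₃)]

end RealCubic

section CubicFamily

variable {E : Type*} [NormedAddCommGroup E] [NormedSpace ℝ E] {n : ℕ∞ω} {S U : Set E}
  {b₀ b₁ b₂ b₃ x₀ : E → ℝ} {δ : ℝ}

theorem exists_contDiffOn_cubic_root [CompleteSpace E] (hU : IsOpen U) (hn : n ≠ 0)
    (h₀ : ContDiffOn ℝ n b₀ U) (h₁ : ContDiffOn ℝ n b₁ U) (h₂ : ContDiffOn ℝ n b₂ U)
    (h₃ : ContDiffOn ℝ n b₃ U) (hδ : 0 < δ)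
    (h : ∀ a ∈ U, |b₀ a| + 2 * |b₂ a| * δ ^ 2 + 3 * |b₃ a| * δ ^ 3 < |b₁ a| * δ) :
    ∃ x₀ : E → ℝ, ContDiffOn ℝ n x₀ U ∧ (∀ a ∈ U, |x₀ a| < δ) ∧
      ∀ a ∈ U, b₃ a * x₀ a ^ 3 + b₂ a * x₀ a ^ 2 + b₁ a * x₀ a + b₀ a = 0 := by
  have hroot (a : E) (ha : a ∈ U) :
      ∃ x ∈ Ioo (-δ) δ, b₃ a * x ^ 3 + b₂ a * x ^ 2 + b₁ a * x + b₀ a = 0 := by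
    have hp₂ : 0 ≤ |b₂ a| * δ ^ 2 := by positivity
    have hp₃ : 0 ≤ |b₃ a| * δ ^ 3 := by positivity
    exact exists_cubic_root_mem_Ioo hδ (by linarith [h a ha])
  have hderiv (a : E) (ha : a ∈ U) (x : ℝ) (hx : x ∈ Ioo (-δ) δ) :
      deriv (fun y => b₃ a * y ^ 3 + b₂ a * y ^ 2 + b₁ a * y + b₀ a) x ≠ 0 := by
    have hslope : 0 < |b₁ a| - 2 * |b₂ a| * δ - 3 * |b₃ a| * δ ^ 2 :=
      pos_of_mul_pos_left (by linarith [h a ha, abs_nonneg (b₀ a)]) hδ.le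
    rw [deriv_cubic, ← abs_pos]
    exact hslope.trans_le (sub_le_abs_deriv_cubic (abs_lt.2 hx).le)
  choose! x₀ hmem hzero using hroot
  have hfst : MapsTo Prod.fst (U ×ˢ Ioo (-δ) δ) U := fun _ hp => hp.1
  have hF : ContDiffOn ℝ n
      (fun p : E × ℝ => b₃ p.1 * p.2 ^ 3 + b₂ p.1 * p.2 ^ 2 + b₁ p.1 * p.2 + b₀ p.1)
      (U ×ˢ Ioo (-δ) δ) :=
    ((((h₃.comp contDiffOn_fst hfst).mul (contDiffOn_snd.pow 3)).add
      ((h₂.comp contDiffOn_fst hfst).mul (contDiffOn_snd.pow 2))).add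
      ((h₁.comp contDiffOn_fst hfst).mul contDiffOn_snd)).add (h₀.comp contDiffOn_fst hfst)
  exact ⟨x₀, contDiffOn_root_of_deriv_ne_zero hU isOpen_Ioo ordConnected_Ioo hn hF hderiv hmem
    hzero, fun a ha => abs_lt.2 (hmem a ha), hzero⟩

theorem deriv_cubic_smul_fderiv_root {a : E} (h₀ : DifferentiableAt ℝ b₀ a)
    (h₁ : DifferentiableAt ℝ b₁ a) (h₂ : DifferentiableAt ℝ b₂ a) (h₃ : DifferentiableAt ℝ b₃ a)
    (hx₀ : DifferentiableAt ℝ x₀ a)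
    (hroot : ∀ᶠ b in 𝓝 a, b₃ b * x₀ b ^ 3 + b₂ b * x₀ b ^ 2 + b₁ b * x₀ b + b₀ b = 0) :
    (b₁ a + 2 * b₂ a * x₀ a + 3 * b₃ a * x₀ a ^ 2) • fderiv ℝ x₀ a
      = -(x₀ a ^ 3 • fderiv ℝ b₃ a + x₀ a ^ 2 • fderiv ℝ b₂ a + x₀ a • fderiv ℝ b₁ a
        + fderiv ℝ b₀ a) := by
  have hx := hx₀.hasFDerivAt
  have htotal := (((h₃.hasFDerivAt.mul (hx.pow 3)).add (h₂.hasFDerivAt.mul (hx.pow 2))).add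
    (h₁.hasFDerivAt.mul hx)).add h₀.hasFDerivAt
  have hzero := htotal.unique ((hasFDerivAt_const (0 : ℝ) a).congr_of_eventuallyEq hroot)
  ext v
  have hv := congrArg (fun L : E →L[ℝ] ℝ => L v) hzero
  simp only [Nat.add_one_sub_one, nsmul_eq_mul, Nat.cast_ofNat, pow_one, add_apply, smul_apply,
    smul_eq_mul, zero_apply, neg_add_rev, neg_apply] at hv ⊢
  linear_combination hv


theorem norm_fderiv_cubic_root_le {a : E} {k M₀ M₁ M₂ M₃ : ℝ} (h₀ : DifferentiableAt ℝ b₀ a)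
    (h₁ : DifferentiableAt ℝ b₁ a) (h₂ : DifferentiableAt ℝ b₂ a) (h₃ : DifferentiableAt ℝ b₃ a)
    (hx₀ : DifferentiableAt ℝ x₀ a)
    (hroot : ∀ᶠ b in 𝓝 a, b₃ b * x₀ b ^ 3 + b₂ b * x₀ b ^ 2 + b₁ b * x₀ b + b₀ b = 0)
    (hx : |x₀ a| ≤ δ) (hk : 0 < k)
    (hslope : k ≤ |b₁ a + 2 * b₂ a * x₀ a + 3 * b₃ a * x₀ a ^ 2|)
    (hM₀ : ‖fderiv ℝ b₀ a‖ ≤ M₀) (hM₁ : ‖fderiv ℝ b₁ a‖ ≤ M₁)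
    (hM₂ : ‖fderiv ℝ b₂ a‖ ≤ M₂) (hM₃ : ‖fderiv ℝ b₃ a‖ ≤ M₃) :
    ‖fderiv ℝ x₀ a‖ ≤ (M₃ * δ ^ 3 + M₂ * δ ^ 2 + M₁ * δ + M₀) / k := by
  have hδ : 0 ≤ δ := (abs_nonneg _).trans hx
  rw [le_div_iff₀' hk]
  calc k * ‖fderiv ℝ x₀ a‖
      ≤ ‖(b₁ a + 2 * b₂ a * x₀ a + 3 * b₃ a * x₀ a ^ 2) • fderiv ℝ x₀ a‖ := by
        rw [norm_smul, Real.norm_eq_abs]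
        gcongr
    _ = ‖x₀ a ^ 3 • fderiv ℝ b₃ a + x₀ a ^ 2 • fderiv ℝ b₂ a + x₀ a • fderiv ℝ b₁ a
          + fderiv ℝ b₀ a‖ := by
        rw [deriv_cubic_smul_fderiv_root h₀ h₁ h₂ h₃ hx₀ hroot, norm_neg]
    _ ≤ |x₀ a| ^ 3 * ‖fderiv ℝ b₃ a‖ + |x₀ a| ^ 2 * ‖fderiv ℝ b₂ a‖ + |x₀ a| * ‖fderiv ℝ b₁ a‖
          + ‖fderiv ℝ b₀ a‖ := by
        refine norm_add₄_le.trans_eq ?_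
        simp only [norm_smul, norm_pow, Real.norm_eq_abs]
    _ ≤ δ ^ 3 * M₃ + δ ^ 2 * M₂ + δ * M₁ + M₀ := by gcongr
    _ = M₃ * δ ^ 3 + M₂ * δ ^ 2 + M₁ * δ + M₀ := by ring

theorem exists_nhds_contDiffOn_cubic_root [CompleteSpace E] (hU : IsOpen U) (hSU : S ⊆ U)
    (hn : n ≠ 0) (h₀ : ContDiffOn ℝ n b₀ U) (h₁ : ContDiffOn ℝ n b₁ U)
    (h₂ : ContDiffOn ℝ n b₂ U) (h₃ : ContDiffOn ℝ n b₃ U) (hδ : 0 < δ)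
    (h : ∀ a ∈ S, |b₀ a| + 2 * |b₂ a| * δ ^ 2 + 3 * |b₃ a| * δ ^ 3 < |b₁ a| * δ) :
    ∃ W, IsOpen W ∧ S ⊆ W ∧ W ⊆ U ∧ ∃ x₀ : E → ℝ, ContDiffOn ℝ n x₀ W ∧
      (∀ a ∈ W, |x₀ a| < δ) ∧
      ∀ a ∈ W, b₃ a * x₀ a ^ 3 + b₂ a * x₀ a ^ 2 + b₁ a * x₀ a + b₀ a = 0 := by
  have hgap : ContinuousOn (fun a =>
      |b₁ a| * δ - (|b₀ a| + 2 * |b₂ a| * δ ^ 2 + 3 * |b₃ a| * δ ^ 3)) U := by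
    have c₀ := h₀.continuousOn
    have c₁ := h₁.continuousOn
    have c₂ := h₂.continuousOn
    have c₃ := h₃.continuousOn
    fun_prop
  have hW := hgap.isOpen_inter_preimage hU (isOpen_Ioi (a := 0))
  have hWU := inter_subset_left (s := U) (t := (fun a =>
    |b₁ a| * δ - (|b₀ a| + 2 * |b₂ a| * δ ^ 2 + 3 * |b₃ a| * δ ^ 3)) ⁻¹' Ioi 0)
  exact ⟨_, hW, fun a ha => ⟨hSU ha, sub_pos.2 (h a ha)⟩, hWU,
    exists_contDiffOn_cubic_root hW hn (h₀.mono hWU) (h₁.mono hWU) (h₂.mono hWU) (h₃.mono hWU) hδ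
      fun a ha => sub_pos.1 ha.2⟩

end CubicFamily

/-- The bound `|‖h‖|_S ≤ M` for the norm `|‖h‖|_S = max (sup_S |h|) (sup_S |h'|)`, stated pointwise
because a real supremum has a junk value on empty or unbounded sets. The parameter ranges over a
normed space, so `h'` is the Fréchet derivative, taken in the ambient space and not within `S`. -/
def C1NormLE {E : Type*} [NormedAddCommGroup E] [NormedSpace ℝ E] (S : Set E) (h : E → ℝ)
    (M : ℝ) : Prop :=
  ∀ a ∈ S, |h a| ≤ M ∧ ‖fderiv ℝ h a‖ ≤ M

theorem c1NormLE_real_iff {S : Set ℝ} {h : ℝ → ℝ} {M : ℝ} :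
    C1NormLE S h M ↔ ∀ a ∈ S, |h a| ≤ M ∧ |deriv h a| ≤ M := by
  simp only [C1NormLE, ← norm_deriv_eq_norm_fderiv, Real.norm_eq_abs]

theorem exists_cubic_root_c1NormLE {E : Type*} [NormedAddCommGroup E] [NormedSpace ℝ E]
    [CompleteSpace E] {n : ℕ∞ω} {S U : Set E} {b₀ b₁ b₂ b₃ : E → ℝ} {δ m M₀ M₁ M₂ M₃ : ℝ}
    (hU : IsOpen U) (hSU : S ⊆ U) (hn : n ≠ 0) (h₀ : ContDiffOn ℝ n b₀ U)
    (h₁ : ContDiffOn ℝ n b₁ U) (h₂ : ContDiffOn ℝ n b₂ U) (h₃ : ContDiffOn ℝ n b₃ U)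
    (hδ : 0 < δ) (hm : 0 < m) (hM₀ : C1NormLE S b₀ M₀) (hm₁ : ∀ a ∈ S, m ≤ |b₁ a|)
    (hM₁ : ∀ a ∈ S, ‖fderiv ℝ b₁ a‖ ≤ M₁) (hM₂ : C1NormLE S b₂ M₂) (hM₃ : C1NormLE S b₃ M₃)
    (hsmall : M₀ + 2 * M₂ * δ ^ 2 + 3 * M₃ * δ ^ 3 ≤ m / 2 * δ) :
    ∃ x₀ : E → ℝ, (∃ W, IsOpen W ∧ S ⊆ W ∧ ContDiffOn ℝ n x₀ W) ∧
      (∀ a ∈ S, b₃ a * x₀ a ^ 3 + b₂ a * x₀ a ^ 2 + b₁ a * x₀ a + b₀ a = 0) ∧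
      C1NormLE S x₀ ((1 + 2 * M₁ / m) * δ) := by
  have hcoeff (a : E) (ha : a ∈ S) :
      |b₀ a| + 2 * |b₂ a| * δ ^ 2 + 3 * |b₃ a| * δ ^ 3 ≤ m / 2 * δ := by
    refine le_trans ?_ hsmall
    gcongr
    exacts [(hM₀ a ha).1, (hM₂ a ha).1, (hM₃ a ha).1]
  have hdom (a : E) (ha : a ∈ S) :
      |b₀ a| + 2 * |b₂ a| * δ ^ 2 + 3 * |b₃ a| * δ ^ 3 < |b₁ a| * δ :=
    (hcoeff a ha).trans_lt (by gcongr; linarith [hm₁ a ha])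
  obtain ⟨W, hW, hSW, hWU, x₀, hx₀, hlt, hroot⟩ :=
    exists_nhds_contDiffOn_cubic_root hU hSU hn h₀ h₁ h₂ h₃ hδ hdom
  refine ⟨x₀, ⟨W, hW, hSW, hx₀⟩, fun a ha => hroot a (hSW ha), fun a ha => ?_⟩
  have hWa : W ∈ 𝓝 a := hW.mem_nhds (hSW ha)
  have differentiableAt {g : E → ℝ} (hg : ContDiffOn ℝ n g W) : DifferentiableAt ℝ g a :=
    (hg.contDiffAt hWa).differentiableAt hn
  have hx : |x₀ a| ≤ δ := (hlt a (hSW ha)).le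
  have hM₁' : 0 ≤ M₁ := (norm_nonneg _).trans (hM₁ a ha)
  have hM₂' : 0 ≤ M₂ * δ ^ 2 := mul_nonneg ((abs_nonneg _).trans (hM₂ a ha).1) (by positivity)
  have hM₃' : 0 ≤ M₃ * δ ^ 3 := mul_nonneg ((abs_nonneg _).trans (hM₃ a ha).1) (by positivity)
  refine ⟨hx.trans (le_mul_of_one_le_left hδ.le ?_), ?_⟩
  · linarith [div_nonneg (mul_nonneg zero_le_two hM₁') hm.le]
  calc ‖fderiv ℝ x₀ a‖
      ≤ (M₃ * δ ^ 3 + M₂ * δ ^ 2 + M₁ * δ + M₀) / (m / 2) :=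
        norm_fderiv_cubic_root_le (differentiableAt (h₀.mono hWU)) (differentiableAt (h₁.mono hWU))
          (differentiableAt (h₂.mono hWU)) (differentiableAt (h₃.mono hWU)) (differentiableAt hx₀)
          (by filter_upwards [hWa] using hroot) hx (half_pos hm)
          (half_le_abs_deriv_cubic hδ hx (hm₁ a ha) (hcoeff a ha))
          (hM₀ a ha).2 (hM₁ a ha) (hM₂ a ha).2 (hM₃ a ha).2
    _ ≤ (m / 2 * δ + M₁ * δ) / (m / 2) :=
        div_le_div_of_nonneg_right (by linarith) (half_pos hm).le
    _ = (1 + 2 * M₁ / m) * δ := by field_simp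

theorem tendsto_rpow_nhdsGT_zero {p : ℝ} (hp : 0 < p) :
    Tendsto (fun t : ℝ => t ^ p) (𝓝[>] 0) (𝓝 0) := by
  simpa only [zero_rpow hp.ne'] using
    (continuousAt_rpow_const 0 p (Or.inr hp.le)).tendsto.mono_left nhdsWithin_le_nhds

theorem eventually_mul_rpow_le_mul_rpow (A : ℝ) {p q c : ℝ} (hpq : p < q) (hc : 0 < c) :
    ∀ᶠ t : ℝ in 𝓝[>] 0, A * t ^ q ≤ c * t ^ p := by
  have hlim : Tendsto (fun t : ℝ => A * t ^ (q - p)) (𝓝[>] 0) (𝓝 0) := by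
    simpa only [mul_zero] using (tendsto_rpow_nhdsGT_zero (sub_pos.2 hpq)).const_mul A
  filter_upwards [hlim.eventually_le_const hc, self_mem_nhdsWithin] with t ht ht0
  calc A * t ^ q = A * t ^ (q - p) * t ^ p := by
        rw [mul_assoc, ← rpow_add ht0, sub_add_cancel]
    _ ≤ c * t ^ p := by
        have : 0 ≤ t ^ p := rpow_nonneg (le_of_lt ht0) p
        gcongr

theorem cubic_small_root_general {E : Type*} [NormedAddCommGroup E] [NormedSpace ℝ E]
    [CompleteSpace E] {n : ℕ∞ω} (hn : n ≠ 0) {c₆ c₇ C ι β κ : ℝ} (hc₆ : 0 < c₆) (hc₇ : 0 ≤ c₇)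
    (hC : 0 ≤ C) (hκι : κ < 8 / 3 * ι) (hκβ : κ < β + 4 / 3 * ι) :
    ∃ ε₀star : ℝ, 0 < ε₀star ∧ ∃ c₉ : ℝ, 0 < c₉ ∧
      ∀ ε₀ ε : ℝ, 0 < ε₀ → ε₀ ≤ ε₀star → 0 < ε → ε ≤ ε₀ ^ ι →
      ∀ (S : Set E) (b₀ b₁ b₂ b₃ : E → ℝ),
      (∃ U, IsOpen U ∧ S ⊆ U ∧ ContDiffOn ℝ n b₀ U ∧ ContDiffOn ℝ n b₁ U ∧
        ContDiffOn ℝ n b₂ U ∧ ContDiffOn ℝ n b₃ U) →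
      C1NormLE S b₀ (C * ε ^ 4) →
      (∀ a ∈ S, ‖fderiv ℝ b₁ a‖ ≤ C * ε₀ ^ κ) →
      (∀ a ∈ S, c₆ * ε₀ ^ κ ≤ |b₁ a|) →
      C1NormLE S b₂ (C * ε₀ ^ β) →
      C1NormLE S b₃ c₇ →
      ∃ x₀ : E → ℝ, (∃ U, IsOpen U ∧ S ⊆ U ∧ ContDiffOn ℝ n x₀ U) ∧
        (∀ a ∈ S, b₃ a * x₀ a ^ 3 + b₂ a * x₀ a ^ 2 + b₁ a * x₀ a + b₀ a = 0) ∧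
        C1NormLE S x₀ (c₉ * ε ^ ((4 : ℝ) / 3)) := by
  obtain ⟨ε₀star, hpos, hsmall⟩ := mem_nhdsGT_iff_exists_Ioc_subset.1
    ((eventually_mul_rpow_le_mul_rpow (C + 3 * c₇) hκι (by positivity : 0 < c₆ / 4)).and
      (eventually_mul_rpow_le_mul_rpow (2 * C) hκβ (by positivity : 0 < c₆ / 4)))
  refine ⟨ε₀star, hpos, 1 + 2 * C / c₆, by positivity, ?_⟩
  rintro ε₀ ε hε₀ hle hε hει S b₀ b₁ b₂ b₃ ⟨U, hU, hSU, h₀, h₁, h₂, h₃⟩ hM₀ hM₁ hm₁ hM₂ hM₃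
  obtain ⟨h_sq, h_cross⟩ := hsmall ⟨hε₀, hle⟩
  set δ := ε ^ ((4 : ℝ) / 3) with hδ_def
  have hδ : 0 < δ := rpow_pos_of_pos hε _
  have hε4 : ε ^ 4 = δ ^ 3 := by
    rw [hδ_def, ← rpow_mul_natCast hε.le, ← rpow_natCast]
    norm_num
  have hδle : δ ≤ ε₀ ^ (4 / 3 * ι) := by
    rw [mul_comm, rpow_mul hε₀.le]
    exact rpow_le_rpow hε.le hει (by norm_num)
  have hκ : 0 < ε₀ ^ κ := rpow_pos_of_pos hε₀ κ
  have hbudget : C * δ ^ 3 + 2 * (C * ε₀ ^ β) * δ ^ 2 + 3 * c₇ * δ ^ 3 ≤ c₆ * ε₀ ^ κ / 2 * δ :=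
    calc _ = ((C + 3 * c₇) * δ ^ 2 + 2 * C * (ε₀ ^ β * δ)) * δ := by ring
      _ ≤ ((C + 3 * c₇) * (ε₀ ^ (4 / 3 * ι)) ^ 2 + 2 * C * (ε₀ ^ β * ε₀ ^ (4 / 3 * ι))) * δ := by
        gcongr
      _ = ((C + 3 * c₇) * ε₀ ^ (8 / 3 * ι) + 2 * C * ε₀ ^ (β + 4 / 3 * ι)) * δ := by
        rw [← rpow_mul_natCast hε₀.le, ← rpow_add hε₀]
        ring_nf
      _ ≤ (c₆ / 4 * ε₀ ^ κ + c₆ / 4 * ε₀ ^ κ) * δ := by gcongr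
      _ = c₆ * ε₀ ^ κ / 2 * δ := by ring
  have hconst : 2 * (C * ε₀ ^ κ) / (c₆ * ε₀ ^ κ) = 2 * C / c₆ := by field_simp
  rw [← hconst]
  exact exists_cubic_root_c1NormLE hU hSU hn h₀ h₁ h₂ h₃ hδ (mul_pos hc₆ hκ) (hε4 ▸ hM₀) hm₁ hM₁
    hM₂ hM₃ hbudget

/-- existence of a small real root, continuously differentiable in the
parameter, for a real cubic `b3 x³ + b2 x² + b1 x + b0` whose coefficients satisfy
the indicated bounds in terms of small parameters `ε ≤ ε0^ι`.  The norm
`|‖h|‖_Π = max(sup_Π |h|, sup_Π |h'|)` is expressed by pointwise bounds on the value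
and the derivative.  The constants `ε0*` and `c9` depend only on the constants
`c6, c7, c8, C, ι, β, κ`. -/
theorem cubic_small_root (c6 c7 c8 C ι β κ : ℝ)
    (hc6 : 0 < c6) (hc7 : 0 < c7) (hc8 : 0 < c8) (hC : 0 < C)
    (hι : 0 < ι) (hβ : 0 < β) (hκ : 0 < κ)
    (hβι : β < 4 / 3 * ι) (hκβ : κ < β + 4 / 3 * ι) :
    ∃ ε0star : ℝ, 0 < ε0star ∧ ∃ c9 : ℝ, 0 < c9 ∧
      ∀ ε0 ε : ℝ, 0 < ε0 → ε0 ≤ ε0star → 0 < ε → ε ≤ ε0 ^ ι →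
      ∀ Pa : Set ℝ, IsClosed Pa → Bornology.IsBounded Pa →
      ∀ b0 b1 b2 b3 : ℝ → ℝ,
      -- continuous differentiability of the coefficients in a neighborhood of Pa
      (∃ U : Set ℝ, IsOpen U ∧ Pa ⊆ U ∧ ContDiffOn ℝ 1 b0 U ∧ ContDiffOn ℝ 1 b1 U ∧
        ContDiffOn ℝ 1 b2 U ∧ ContDiffOn ℝ 1 b3 U) →
      -- |‖b0|‖_Π ≤ C ε⁴
      (∀ a ∈ Pa, |b0 a| ≤ C * ε ^ (4 : ℕ) ∧ |deriv b0 a| ≤ C * ε ^ (4 : ℕ)) →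
      -- |‖b1|‖_Π ≤ C ε0^κ and inf_Π |b1| ≥ c6 ε0^κ
      (∀ a ∈ Pa, |b1 a| ≤ C * ε0 ^ κ ∧ |deriv b1 a| ≤ C * ε0 ^ κ) →
      (∀ a ∈ Pa, c6 * ε0 ^ κ ≤ |b1 a|) →
      -- |‖b2|‖_Π ≤ C ε0^β
      (∀ a ∈ Pa, |b2 a| ≤ C * ε0 ^ β ∧ |deriv b2 a| ≤ C * ε0 ^ β) →
      -- |‖b3|‖_Π ≤ c7 and inf_Π |b3| ≥ c8
      (∀ a ∈ Pa, |b3 a| ≤ c7 ∧ |deriv b3 a| ≤ c7) →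
      (∀ a ∈ Pa, c8 ≤ |b3 a|) →
      ∃ x0 : ℝ → ℝ,
        (∃ U : Set ℝ, IsOpen U ∧ Pa ⊆ U ∧ ContDiffOn ℝ 1 x0 U) ∧
        (∀ a ∈ Pa, b3 a * x0 a ^ 3 + b2 a * x0 a ^ 2 + b1 a * x0 a + b0 a = 0) ∧
        (∀ a ∈ Pa, |x0 a| ≤ c9 * ε ^ ((4 : ℝ) / 3) ∧ |deriv x0 a| ≤ c9 * ε ^ ((4 : ℝ) / 3)) := by
  obtain ⟨ε0star, hpos, c9, hc9, h⟩ := cubic_small_root_general (E := ℝ) one_ne_zero hc6 hc7.le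
    hC.le (by linarith : κ < 8 / 3 * ι) hκβ
  simp only [c1NormLE_real_iff, ← norm_deriv_eq_norm_fderiv, Real.norm_eq_abs] at h
  exact ⟨ε0star, hpos, c9, hc9, fun ε0 ε hε0 hle hε hει Pa _ _ b0 b1 b2 b3 hU hb0 hb1 hb1' =>
    fun hb2 hb3 _ => h ε0 ε hε0 hle hε hει Pa b0 b1 b2 b3 hU hb0 (hb1 · · |>.2) hb1' hb2 hb3⟩
end

section
/- Let b3 and c0, c1, c2, c3 be real functions on a bounded closed set Π ⊂ ℝ, continuously differentiable in a, and consider the real cubic equation b3(a) u³ + ε0³ c2(a) u² + ε0² c1(a) u + ε0 c0(a) = 0. Assume there are positive constants c, c', M with inf_{a∈Π} |b3(a)| ≥ c, inf_{a∈Π} |c0(a)| ≥ c', and |‖b3|‖_Π, |‖cj|‖_Π ≤ M for j = 0,1,2. Then for ε0 sufficiently small the equation has a real root w10(a), continuously differentiable in a ∈ Π, satisfying w10(a) = −(ε0 c0(a)/b3(a))^{1/3} (1 + O(ε0)); in particular there exist positive constants c4, c5 such that c4 ε0^{1/3} ≤ |w10(a)| ≤ c5 ε0^{1/3} for all a ∈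 Π and |‖w10|‖_Π ≤ c5 ε0^{1/3}. -/
open Real

/-- The real cube root. -/
noncomputable def cbrt (x : ℝ) : ℝ := Real.sign x * |x| ^ ((1 : ℝ) / 3)

/-! With `e = ε0^{1/3}` and `u = e v` the equation becomes
`b3 v³ + e⁸ c2 v² + e⁴ c1 v + c0 = 0`, a small perturbation of `b3 v³ + c0 = 0`. The implicit
function theorem gives a root of `b v³ + p v² + q v + d` as a `C¹` function of the four
coefficients near `p = q = 0`, and compactness of the region `c ≤ |b| ≤ M`, `c' ≤ |d| ≤ M` makes
all bounds on this function uniform. Inserting the coefficient functions and applying the chain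
rule yields `w10`, with constants that depend on `c`, `c'` and `M` only. -/

open Filter Metric Set Topology
open scoped ContDiff

section Calculus

variable {E F : Type*} [NormedAddCommGroup E] [NormedSpace ℝ E]
  [NormedAddCommGroup F] [NormedSpace ℝ F]

theorem exists_isOpen_contDiffOn_of_contDiffAt {f : E → F} {s : Set E} {n : ℕ∞ω} (hn : n ≠ ∞)
    (hf : ∀ x ∈ s, ContDiffAt ℝ n f x) :
    ∃ U : Set E, IsOpen U ∧ s ⊆ U ∧ ContDiffOn ℝ n f U :=
  ⟨{x | ContDiffAt ℝ n f x}, isOpen_iff_mem_nhds.2 fun _ hx ↦ hx.eventually hn, hf,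
    fun _ hx ↦ ContDiffAt.contDiffWithinAt hx⟩

theorem exists_pos_norm_le_norm_fderiv_le_of_isCompact {f : E → F} {K : Set E} (hK : IsCompact K)
    (hf : ∀ x ∈ K, ContDiffAt ℝ 1 f x) :
    ∃ C : ℝ, 0 < C ∧ ∀ x ∈ K, ‖f x‖ ≤ C ∧ ‖fderiv ℝ f x‖ ≤ C := by
  obtain ⟨A, hA⟩ := hK.exists_bound_of_continuousOn
    fun x hx ↦ (hf x hx).continuousAt.continuousWithinAt
  obtain ⟨B, hB⟩ := hK.exists_bound_of_continuousOn
    fun x hx ↦ ((hf x hx).fderiv_right (m := 0) (by simp)).continuousAt.continuousWithinAt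
  refine ⟨max 1 (max A B), by positivity, fun x hx ↦ ⟨(hA x hx).trans ?_, (hB x hx).trans ?_⟩⟩ <;>
    simp

theorem exists_implicitFunction_of_deriv_ne_zero [CompleteSpace E] {f : E × ℝ → ℝ} {x : E}
    {t f' : ℝ} {n : ℕ∞ω} (hn : n ≠ 0) (hn' : n ≠ ∞) (hf : ContDiffAt ℝ n f (x, t))
    (hderiv : HasDerivAt (fun s ↦ f (x, s)) f' t) (hf' : f' ≠ 0) :
    ∃ φ : E → ℝ, φ x = t ∧ ∀ᶠ y in 𝓝 x, ContDiffAt ℝ n φ y ∧ f (y, φ y) = f (x, t) := by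
  have partial_eq : (fderiv ℝ f (x, t) ∘L ContinuousLinearMap.inr ℝ E ℝ) 1 = f' :=
    ((hf.differentiableAt hn).hasFDerivAt.comp t
      (hasFDerivAt_prodMk_right x t)).hasDerivAt.unique hderiv
  have invertible : (fderiv ℝ f (x, t) ∘L ContinuousLinearMap.inr ℝ E ℝ).IsInvertible := by
    refine ⟨ContinuousLinearEquiv.smulLeft (Units.mk0 f' hf'), ?_⟩
    ext
    rw [partial_eq]
    simp [Units.smul_def]
  exact ⟨hf.implicitFunction hn invertible, hf.implicitFunction_apply_self hn invertible,
    ((hf.contDiffAt_implicitFunction hn invertible).eventually hn').and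
      (hf.eventually_apply_implicitFunction hn invertible)⟩

end Calculus

section CubeRoot

theorem rpow_one_third_pow_three {x : ℝ} (hx : 0 ≤ x) : (x ^ ((1 : ℝ) / 3)) ^ 3 = x := by
  simpa using rpow_inv_natCast_pow hx three_ne_zero

theorem cbrt_pow_three (x : ℝ) : cbrt x ^ 3 = x := by
  rw [cbrt, mul_pow, rpow_one_third_pow_three (abs_nonneg x)]
  rcases lt_trichotomy x 0 with hx | rfl | hx
  · rw [sign_of_neg hx, abs_of_neg hx]; ring
  · simp
  · rw [sign_of_pos hx, abs_of_pos hx]; ring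

theorem cbrt_pow_three_mul (e x : ℝ) : cbrt (e ^ 3 * x) = e * cbrt x := by
  apply (Odd.strictMono_pow (R := ℝ) (n := 3) (by decide)).injective
  simp only [mul_pow, cbrt_pow_three]

theorem cbrt_ne_zero {x : ℝ} (hx : x ≠ 0) : cbrt x ≠ 0 := by
  intro h
  apply hx
  rw [← cbrt_pow_three x, h, zero_pow three_ne_zero]

theorem contDiffAt_cbrt {x : ℝ} {n : ℕ∞ω} (hx : x ≠ 0) : ContDiffAt ℝ n cbrt x := by
  have hpos : 0 < Real.sign x * x := sign_mul_pos_of_ne_zero x hx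
  have hlocal : ContDiffAt ℝ n (fun y ↦ Real.sign x * (Real.sign x * y) ^ ((1 : ℝ) / 3)) x :=
    contDiffAt_const.mul
      ((contDiffAt_rpow_const_of_ne hpos.ne').comp x (contDiffAt_const.mul contDiffAt_id))
  refine hlocal.congr_of_eventuallyEq ?_
  rcases hx.lt_or_gt with hx | hx
  · filter_upwards [eventually_lt_nhds hx] with y hy
    rw [cbrt, sign_of_neg hy, sign_of_neg hx, abs_of_neg hy, neg_one_mul y]
  · filter_upwards [eventually_gt_nhds hx] with y hy
    rw [cbrt, sign_of_pos hy, sign_of_pos hx, abs_of_pos hy, one_mul y]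

end CubeRoot

section PerturbedCubic

/-- The value at `u` of the cubic `b u³ + p u² + q u + d`. The coefficients are grouped as
`z = ((p, q), (b, d))`, so that `z.1` is the perturbation and `z.2` the unperturbed cubic. -/
def cubicEval (z : (ℝ × ℝ) × ℝ × ℝ) (u : ℝ) : ℝ :=
  z.2.1 * u ^ 3 + z.1.1 * u ^ 2 + z.1.2 * u + z.2.2

/-- The real root of the unperturbed cubic `b u³ + d`, as a function of `x = (b, d)`. -/
noncomputable def unperturbedRoot (x : ℝ × ℝ) : ℝ := -cbrt (x.2 / x.1)

/-- The perturbation `(p, q)` after the unknown is rescaled by `unperturbedRoot` and the cubic is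
divided by its leading coefficient, which turns it into `u³ + p u² + q u - 1`. -/
noncomputable def normalizedPerturbation (z : (ℝ × ℝ) × ℝ × ℝ) : ℝ × ℝ :=
  (z.1.1 / (z.2.1 * unperturbedRoot z.2), z.1.2 / (z.2.1 * unperturbedRoot z.2 ^ 2))

theorem unperturbedRoot_ne_zero {x : ℝ × ℝ} (hb : x.1 ≠ 0) (hd : x.2 ≠ 0) :
    unperturbedRoot x ≠ 0 :=
  neg_ne_zero.2 (cbrt_ne_zero (div_ne_zero hd hb))

theorem mul_unperturbedRoot_pow_three {x : ℝ × ℝ} (hb : x.1 ≠ 0) :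
    x.1 * unperturbedRoot x ^ 3 = -x.2 := by
  rw [unperturbedRoot, Odd.neg_pow (by decide), cbrt_pow_three]
  field_simp

theorem contDiffAt_unperturbedRoot {x : ℝ × ℝ} {n : ℕ∞ω} (hb : x.1 ≠ 0) (hd : x.2 ≠ 0) :
    ContDiffAt ℝ n unperturbedRoot x :=
  ((contDiffAt_cbrt (div_ne_zero hd hb)).comp x (contDiffAt_snd.div contDiffAt_fst hb)).neg

theorem contDiffAt_normalizedPerturbation {z : (ℝ × ℝ) × ℝ × ℝ} {n : ℕ∞ω} (hb : z.2.1 ≠ 0)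
    (hd : z.2.2 ≠ 0) : ContDiffAt ℝ n normalizedPerturbation z := by
  have hroot : ContDiffAt ℝ n (fun z : (ℝ × ℝ) × ℝ × ℝ ↦ unperturbedRoot z.2) z :=
    (contDiffAt_unperturbedRoot hb hd).comp z contDiffAt_snd
  have hne := unperturbedRoot_ne_zero hb hd
  unfold normalizedPerturbation
  fun_prop (disch := positivity)

theorem cubicEval_unperturbedRoot_mul {z : (ℝ × ℝ) × ℝ × ℝ} (hb : z.2.1 ≠ 0) (hd : z.2.2 ≠ 0)
    (t : ℝ) :
    cubicEval z (unperturbedRoot z.2 * t) =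
      -z.2.2 * cubicEval (normalizedPerturbation z, (1, -1)) t := by
  have hne := unperturbedRoot_ne_zero hb hd
  rw [← mul_unperturbedRoot_pow_three hb]
  simp only [cubicEval, normalizedPerturbation]
  field_simp
  linear_combination mul_unperturbedRoot_pow_three hb

theorem exists_normalizedCubic_root :
    ∃ φ : ℝ × ℝ → ℝ, φ 0 = 1 ∧
      ∀ᶠ x in 𝓝 0, ContDiffAt ℝ 1 φ x ∧ cubicEval (x, (1, -1)) (φ x) = 0 := by
  have hderiv : HasDerivAt (fun t ↦ cubicEval ((0 : ℝ × ℝ), (1, -1)) t) 3 1 := by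
    simpa [cubicEval] using (hasDerivAt_pow 3 (1 : ℝ)).add_const (-1)
  have hsmooth : ContDiff ℝ 1 fun y : (ℝ × ℝ) × ℝ ↦ cubicEval (y.1, (1, -1)) y.2 := by
    unfold cubicEval
    fun_prop
  simpa [cubicEval] using exists_implicitFunction_of_deriv_ne_zero one_ne_zero (by simp)
    hsmooth.contDiffAt hderiv three_ne_zero

theorem exists_cubicEval_root :
    ∃ Ψ : (ℝ × ℝ) × ℝ × ℝ → ℝ, ∀ x : ℝ × ℝ, x.1 ≠ 0 → x.2 ≠ 0 → Ψ (0, x) = unperturbedRoot x ∧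
      ∀ᶠ z in 𝓝 ((0 : ℝ × ℝ), x), ContDiffAt ℝ 1 Ψ z ∧ cubicEval z (Ψ z) = 0 := by
  obtain ⟨φ, φ_zero, hφ⟩ := exists_normalizedCubic_root
  refine ⟨fun z ↦ unperturbedRoot z.2 * φ (normalizedPerturbation z), fun x hb hd ↦ ⟨?_, ?_⟩⟩
  · simp [normalizedPerturbation, ← Prod.zero_eq_mk, φ_zero]
  have htendsto : Tendsto normalizedPerturbation (𝓝 ((0 : ℝ × ℝ), x)) (𝓝 0) := by
    simpa [normalizedPerturbation, ← Prod.zero_eq_mk] using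
      (contDiffAt_normalizedPerturbation (z := (0, x)) (n := 0) hb hd).continuousAt.tendsto
  have hb_near : ∀ᶠ z : (ℝ × ℝ) × ℝ × ℝ in 𝓝 (0, x), z.2.1 ≠ 0 :=
    ContinuousAt.eventually_ne (by fun_prop) hb
  have hd_near : ∀ᶠ z : (ℝ × ℝ) × ℝ × ℝ in 𝓝 (0, x), z.2.2 ≠ 0 :=
    ContinuousAt.eventually_ne (by fun_prop) hd
  filter_upwards [htendsto.eventually hφ, hb_near, hd_near] with z ⟨hφz, hroot⟩ hb hd
  refine ⟨?_, by rw [cubicEval_unperturbedRoot_mul hb hd, hroot, mul_zero]⟩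
  exact ((contDiffAt_unperturbedRoot hb hd).comp z contDiffAt_snd).mul
    (hφz.comp z (contDiffAt_normalizedPerturbation hb hd))

theorem ne_zero_of_cubicEval_eq_zero {z : (ℝ × ℝ) × ℝ × ℝ} {u : ℝ} (hd : z.2.2 ≠ 0)
    (hu : cubicEval z u = 0) : u ≠ 0 := by
  rintro rfl
  exact hd (by simpa [cubicEval] using hu)

/-- The pairs `(b, d)` of outer coefficients with `c ≤ |b| ≤ M` and `c' ≤ |d| ≤ M`. -/
def outerCoeffRegion (c c' M : ℝ) : Set (ℝ × ℝ) :=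
  {x | (c ≤ |x.1| ∧ |x.1| ≤ M) ∧ c' ≤ |x.2| ∧ |x.2| ≤ M}

theorem isCompact_outerCoeffRegion (c c' M : ℝ) : IsCompact (outerCoeffRegion c c' M) := by
  have hannulus (r : ℝ) : IsCompact {x : ℝ | r ≤ |x| ∧ |x| ≤ M} := by
    convert! (isCompact_closedBall (0 : ℝ) M).diff (isOpen_ball (x := 0) (ε := r)) using 1
    ext x
    simp [and_comm]
  exact (hannulus c).prod (hannulus c')

/-- `Ψ` is a `C¹` branch of roots of the cubics whose perturbation has norm at most `η` and whose
outer coefficients lie in `K`, with bounds `m` and `D` that are uniform over these cubics. -/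
structure IsUniformRootBranch (Ψ : (ℝ × ℝ) × ℝ × ℝ → ℝ) (K : Set (ℝ × ℝ)) (η m D : ℝ) : Prop where
  contDiffAt : ∀ z ∈ closedBall 0 η ×ˢ K, ContDiffAt ℝ 1 Ψ z
  cubicEval_eq_zero : ∀ z ∈ closedBall 0 η ×ˢ K, cubicEval z (Ψ z) = 0
  le_abs : ∀ z ∈ closedBall 0 η ×ˢ K, m ≤ |Ψ z|
  abs_le : ∀ z ∈ closedBall 0 η ×ˢ K, |Ψ z| ≤ D
  norm_fderiv_le : ∀ z ∈ closedBall 0 η ×ˢ K, ‖fderiv ℝ Ψ z‖ ≤ D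
  abs_sub_unperturbedRoot_le : ∀ z ∈ closedBall 0 η ×ˢ K, |Ψ z - unperturbedRoot z.2| ≤ D * ‖z.1‖

theorem exists_isUniformRootBranch {K : Set (ℝ × ℝ)} (hK : IsCompact K)
    (hb : ∀ x ∈ K, x.1 ≠ 0) (hd : ∀ x ∈ K, x.2 ≠ 0) :
    ∃ Ψ η m D, 0 < η ∧ 0 < m ∧ 0 < D ∧ IsUniformRootBranch Ψ K η m D := by
  obtain ⟨Ψ, hΨ⟩ := exists_cubicEval_root
  obtain ⟨η, hη, hnear⟩ := nhds_basis_closedBall.eventually_iff.1 <|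
    hK.eventually_forall_of_forall_eventually
      (P := fun y x ↦ ContDiffAt ℝ 1 Ψ (y, x) ∧ cubicEval (y, x) (Ψ (y, x)) = 0)
      fun x hx ↦ (hΨ x (hb x hx) (hd x hx)).2
  have hsmooth : ∀ z ∈ closedBall 0 η ×ˢ K, ContDiffAt ℝ 1 Ψ z :=
    fun z hz ↦ (hnear hz.1 z.2 hz.2).1
  have hroot : ∀ z ∈ closedBall 0 η ×ˢ K, cubicEval z (Ψ z) = 0 :=
    fun z hz ↦ (hnear hz.1 z.2 hz.2).2
  have hcompact : IsCompact (closedBall (0 : ℝ × ℝ) η ×ˢ K) := (isCompact_closedBall 0 η).prod hK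
  obtain ⟨m, hm, hle⟩ := hcompact.exists_forall_le' (f := fun z ↦ |Ψ z|) (a := 0)
    (fun z hz ↦ (hsmooth z hz).continuousAt.abs.continuousWithinAt)
    fun z hz ↦ abs_pos.2 (ne_zero_of_cubicEval_eq_zero (hd _ hz.2) (hroot z hz))
  obtain ⟨D, hD, hbound⟩ := exists_pos_norm_le_norm_fderiv_le_of_isCompact hcompact hsmooth
  refine ⟨Ψ, η, m, D, hη, hm, hD, hsmooth, hroot, hle, fun z hz ↦ (hbound z hz).1,
    fun z hz ↦ (hbound z hz).2, fun z hz ↦ ?_⟩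
  have hslice : closedBall (0 : ℝ × ℝ) η ×ˢ {z.2} ⊆ closedBall 0 η ×ˢ K :=
    prod_mono_right (singleton_subset_iff.2 hz.2)
  have hmvt := ((convex_closedBall (0 : ℝ × ℝ) η).prod
    (convex_singleton z.2)).norm_image_sub_le_of_norm_fderiv_le (𝕜 := ℝ)
      (fun y hy ↦ (hsmooth y (hslice hy)).differentiableAt one_ne_zero)
      (fun y hy ↦ (hbound y (hslice hy)).2)
      (mk_mem_prod (mem_closedBall_self hη.le) rfl) (mk_mem_prod hz.1 rfl)
  simpa [(hΨ z.2 (hb _ hz.2) (hd _ hz.2)).1, Prod.norm_def] using hmvt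

end PerturbedCubic

section Rescaling

variable {E : Type*} {e M : ℝ} {b3 c0 c1 c2 : E → ℝ} {a : E}

/-- The coefficients, in the grouping of `cubicEval`, of the cubic in `v` obtained by
putting `ε0 = e³` and `u = e v` in the original equation and dividing by `e³`. -/
def rescaledCoeffs (e : ℝ) (b3 c0 c1 c2 : E → ℝ) (a : E) : (ℝ × ℝ) × ℝ × ℝ :=
  ((e ^ 8 * c2 a, e ^ 4 * c1 a), (b3 a, c0 a))

/-- The root `u = e v` of the original equation that a branch `Ψ` of roots of the rescaled
cubic provides, as a function of the parameter `a`. -/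
def rescaledRoot (Ψ : (ℝ × ℝ) × ℝ × ℝ → ℝ) (e : ℝ) (b3 c0 c1 c2 : E → ℝ) (a : E) : ℝ :=
  e * Ψ (rescaledCoeffs e b3 c0 c1 c2 a)

theorem cubic_mul_eq_cubicEval_rescaledCoeffs (v : ℝ) :
    b3 a * (e * v) ^ 3 + (e ^ 3) ^ 3 * c2 a * (e * v) ^ 2 + (e ^ 3) ^ 2 * c1 a * (e * v) +
      e ^ 3 * c0 a = e ^ 3 * cubicEval (rescaledCoeffs e b3 c0 c1 c2 a) v := by
  simp only [cubicEval, rescaledCoeffs]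
  ring

theorem norm_rescaledCoeffs_fst_le (he : 0 ≤ e) (he1 : e ≤ 1) (h1 : |c1 a| ≤ M)
    (h2 : |c2 a| ≤ M) : ‖(rescaledCoeffs e b3 c0 c1 c2 a).1‖ ≤ e ^ 3 * M := by
  have h8 : e ^ 8 ≤ e ^ 3 := pow_le_pow_of_le_one he he1 (by norm_num)
  have h4 : e ^ 4 ≤ e ^ 3 := pow_le_pow_of_le_one he he1 (by norm_num)
  simp only [rescaledCoeffs, Prod.norm_mk, norm_mul, norm_pow, norm_eq_abs, abs_of_nonneg he]
  exact max_le (by gcongr) (by gcongr)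

theorem rescaledCoeffs_mem {c c' η : ℝ} (he : 0 ≤ e) (he1 : e ≤ 1) (heη : e ^ 3 * M ≤ η)
    (hb3 : c ≤ |b3 a|) (hb3M : |b3 a| ≤ M) (hc0 : c' ≤ |c0 a|) (hc0M : |c0 a| ≤ M)
    (hc1M : |c1 a| ≤ M) (hc2M : |c2 a| ≤ M) :
    rescaledCoeffs e b3 c0 c1 c2 a ∈ closedBall 0 η ×ˢ outerCoeffRegion c c' M :=
  ⟨mem_closedBall_zero_iff.2 ((norm_rescaledCoeffs_fst_le he he1 hc1M hc2M).trans heη),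
    ⟨hb3, hb3M⟩, hc0, hc0M⟩

section Derivative

variable [NormedAddCommGroup E] [NormedSpace ℝ E]

theorem contDiffAt_rescaledCoeffs {n : ℕ∞ω} (hb3 : ContDiffAt ℝ n b3 a)
    (hc0 : ContDiffAt ℝ n c0 a) (hc1 : ContDiffAt ℝ n c1 a) (hc2 : ContDiffAt ℝ n c2 a) :
    ContDiffAt ℝ n (rescaledCoeffs e b3 c0 c1 c2) a := by
  unfold rescaledCoeffs
  fun_prop

theorem norm_fderiv_rescaledCoeffs_le (he : 0 ≤ e) (he1 : e ≤ 1)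
    (hb3 : DifferentiableAt ℝ b3 a) (hc0 : DifferentiableAt ℝ c0 a)
    (hc1 : DifferentiableAt ℝ c1 a) (hc2 : DifferentiableAt ℝ c2 a)
    (hb3M : ‖fderiv ℝ b3 a‖ ≤ M) (hc0M : ‖fderiv ℝ c0 a‖ ≤ M)
    (hc1M : ‖fderiv ℝ c1 a‖ ≤ M) (hc2M : ‖fderiv ℝ c2 a‖ ≤ M) :
    ‖fderiv ℝ (rescaledCoeffs e b3 c0 c1 c2) a‖ ≤ M := by
  have hderiv : HasFDerivAt (rescaledCoeffs e b3 c0 c1 c2)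
      (((e ^ 8 • fderiv ℝ c2 a).prod (e ^ 4 • fderiv ℝ c1 a)).prod
        ((fderiv ℝ b3 a).prod (fderiv ℝ c0 a))) a :=
    ((hc2.hasFDerivAt.const_mul _).prodMk (hc1.hasFDerivAt.const_mul _)).prodMk
      (hb3.hasFDerivAt.prodMk hc0.hasFDerivAt)
  have hscaled : ∀ {L : E →L[ℝ] ℝ} (k : ℕ), ‖L‖ ≤ M → ‖e ^ k • L‖ ≤ M := fun {L} k hL ↦ by
    rw [norm_smul, norm_pow, norm_of_nonneg he]
    exact (mul_le_of_le_one_left (norm_nonneg L) (pow_le_one₀ he he1)).trans hL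
  rw [hderiv.fderiv]
  simp only [ContinuousLinearMap.opNorm_prod, Prod.norm_mk]
  exact max_le (max_le (hscaled 8 hc2M) (hscaled 4 hc1M)) (max_le hb3M hc0M)

end Derivative

namespace IsUniformRootBranch

variable {Ψ : (ℝ × ℝ) × ℝ × ℝ → ℝ} {K : Set (ℝ × ℝ)} {η m D : ℝ}

theorem cubic_rescaledRoot_eq_zero (hΨ : IsUniformRootBranch Ψ K η m D)
    (ha : rescaledCoeffs e b3 c0 c1 c2 a ∈ closedBall 0 η ×ˢ K) :
    b3 a * rescaledRoot Ψ e b3 c0 c1 c2 a ^ 3 +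
      (e ^ 3) ^ 3 * c2 a * rescaledRoot Ψ e b3 c0 c1 c2 a ^ 2 +
      (e ^ 3) ^ 2 * c1 a * rescaledRoot Ψ e b3 c0 c1 c2 a + e ^ 3 * c0 a = 0 := by
  rw [rescaledRoot, cubic_mul_eq_cubicEval_rescaledCoeffs, hΨ.cubicEval_eq_zero _ ha, mul_zero]

theorem le_abs_rescaledRoot (hΨ : IsUniformRootBranch Ψ K η m D) (he : 0 ≤ e)
    (ha : rescaledCoeffs e b3 c0 c1 c2 a ∈ closedBall 0 η ×ˢ K) :
    m * e ≤ |rescaledRoot Ψ e b3 c0 c1 c2 a| := by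
  rw [rescaledRoot, abs_mul, abs_of_nonneg he, mul_comm e]
  exact mul_le_mul_of_nonneg_right (hΨ.le_abs _ ha) he

theorem abs_rescaledRoot_le (hΨ : IsUniformRootBranch Ψ K η m D) (he : 0 ≤ e)
    (ha : rescaledCoeffs e b3 c0 c1 c2 a ∈ closedBall 0 η ×ˢ K) :
    |rescaledRoot Ψ e b3 c0 c1 c2 a| ≤ D * e := by
  rw [rescaledRoot, abs_mul, abs_of_nonneg he, mul_comm e]
  exact mul_le_mul_of_nonneg_right (hΨ.abs_le _ ha) he

theorem abs_rescaledRoot_add_cbrt_le (hΨ : IsUniformRootBranch Ψ K η m D) (he : 0 ≤ e)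
    (he1 : e ≤ 1) (hc1 : |c1 a| ≤ M) (hc2 : |c2 a| ≤ M)
    (ha : rescaledCoeffs e b3 c0 c1 c2 a ∈ closedBall 0 η ×ˢ K) :
    |rescaledRoot Ψ e b3 c0 c1 c2 a + cbrt (e ^ 3 * c0 a / b3 a)| ≤ D * M * e ^ 3 * e := by
  have hD : 0 ≤ D := (abs_nonneg _).trans (hΨ.abs_le _ ha)
  have hsub : rescaledRoot Ψ e b3 c0 c1 c2 a + cbrt (e ^ 3 * c0 a / b3 a) =
      e * (Ψ (rescaledCoeffs e b3 c0 c1 c2 a) - unperturbedRoot (b3 a, c0 a)) := by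
    rw [rescaledRoot, unperturbedRoot, mul_div_assoc, cbrt_pow_three_mul]
    ring
  calc |rescaledRoot Ψ e b3 c0 c1 c2 a + cbrt (e ^ 3 * c0 a / b3 a)|
      = e * |Ψ (rescaledCoeffs e b3 c0 c1 c2 a) - unperturbedRoot (b3 a, c0 a)| := by
        rw [hsub, abs_mul, abs_of_nonneg he]
    _ ≤ e * (D * (e ^ 3 * M)) := by
        gcongr
        exact (hΨ.abs_sub_unperturbedRoot_le _ ha).trans <|
          mul_le_mul_of_nonneg_left (norm_rescaledCoeffs_fst_le he he1 hc1 hc2) hD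
    _ = D * M * e ^ 3 * e := by ring

variable [NormedAddCommGroup E] [NormedSpace ℝ E]

theorem contDiffAt_rescaledRoot (hΨ : IsUniformRootBranch Ψ K η m D)
    (ha : rescaledCoeffs e b3 c0 c1 c2 a ∈ closedBall 0 η ×ˢ K)
    (hcoeffs : ContDiffAt ℝ 1 (rescaledCoeffs e b3 c0 c1 c2) a) :
    ContDiffAt ℝ 1 (rescaledRoot Ψ e b3 c0 c1 c2) a :=
  contDiffAt_const.mul ((hΨ.contDiffAt _ ha).comp a hcoeffs)

theorem norm_fderiv_rescaledRoot_le (hΨ : IsUniformRootBranch Ψ K η m D) (he : 0 ≤ e)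
    (ha : rescaledCoeffs e b3 c0 c1 c2 a ∈ closedBall 0 η ×ˢ K)
    (hcoeffs : DifferentiableAt ℝ (rescaledCoeffs e b3 c0 c1 c2) a)
    (hM : ‖fderiv ℝ (rescaledCoeffs e b3 c0 c1 c2) a‖ ≤ M) :
    ‖fderiv ℝ (rescaledRoot Ψ e b3 c0 c1 c2) a‖ ≤ D * M * e := by
  have hderiv : HasFDerivAt (rescaledRoot Ψ e b3 c0 c1 c2)
      (e • (fderiv ℝ Ψ (rescaledCoeffs e b3 c0 c1 c2 a) ∘L
        fderiv ℝ (rescaledCoeffs e b3 c0 c1 c2) a)) a :=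
    (((hΨ.contDiffAt _ ha).differentiableAt one_ne_zero).hasFDerivAt.comp a
      hcoeffs.hasFDerivAt).const_mul e
  have hD := hΨ.norm_fderiv_le _ ha
  rw [hderiv.fderiv, norm_smul, norm_of_nonneg he, mul_comm e]
  refine mul_le_mul_of_nonneg_right ?_ he
  exact (ContinuousLinearMap.opNorm_comp_le _ _).trans
    (mul_le_mul hD hM (norm_nonneg _) ((norm_nonneg _).trans hD))

theorem exists_cubic_root {c c' : ℝ} {S : Set E}
    (hΨ : IsUniformRootBranch Ψ (outerCoeffRegion c c' M) η m D) (he : 0 ≤ e) (he1 : e ≤ 1)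
    (heη : e ^ 3 * M ≤ η)
    (sb3 : ∀ a ∈ S, ContDiffAt ℝ 1 b3 a) (sc0 : ∀ a ∈ S, ContDiffAt ℝ 1 c0 a)
    (sc1 : ∀ a ∈ S, ContDiffAt ℝ 1 c1 a) (sc2 : ∀ a ∈ S, ContDiffAt ℝ 1 c2 a)
    (hb3 : ∀ a ∈ S, c ≤ |b3 a|) (hc0 : ∀ a ∈ S, c' ≤ |c0 a|)
    (hbound : ∀ a ∈ S,
      |b3 a| ≤ M ∧ ‖fderiv ℝ b3 a‖ ≤ M ∧ |c0 a| ≤ M ∧ ‖fderiv ℝ c0 a‖ ≤ M ∧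
      |c1 a| ≤ M ∧ ‖fderiv ℝ c1 a‖ ≤ M ∧ |c2 a| ≤ M ∧ ‖fderiv ℝ c2 a‖ ≤ M) :
    ∃ w : E → ℝ, (∀ a ∈ S, ContDiffAt ℝ 1 w a) ∧
      (∀ a ∈ S, b3 a * w a ^ 3 + (e ^ 3) ^ 3 * c2 a * w a ^ 2 + (e ^ 3) ^ 2 * c1 a * w a +
        e ^ 3 * c0 a = 0) ∧
      (∀ a ∈ S, |w a + cbrt (e ^ 3 * c0 a / b3 a)| ≤ D * M * e ^ 3 * e) ∧
      (∀ a ∈ S, m * e ≤ |w a| ∧ |w a| ≤ max D (D * M) * e ∧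
        ‖fderiv ℝ w a‖ ≤ max D (D * M) * e) := by
  refine ⟨rescaledRoot Ψ e b3 c0 c1 c2, ?_⟩
  simp only [← forall₂_and]
  intro a ha
  obtain ⟨hb3M, db3, hc0M, dc0, hc1M, dc1, hc2M, dc2⟩ := hbound a ha
  have hmem : rescaledCoeffs e b3 c0 c1 c2 a ∈ closedBall 0 η ×ˢ outerCoeffRegion c c' M :=
    rescaledCoeffs_mem he he1 heη (hb3 a ha) hb3M (hc0 a ha) hc0M hc1M hc2M
  have hcoeffs : ContDiffAt ℝ 1 (rescaledCoeffs e b3 c0 c1 c2) a :=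
    contDiffAt_rescaledCoeffs (sb3 a ha) (sc0 a ha) (sc1 a ha) (sc2 a ha)
  have hfderiv : ‖fderiv ℝ (rescaledCoeffs e b3 c0 c1 c2) a‖ ≤ M :=
    norm_fderiv_rescaledCoeffs_le he he1 ((sb3 a ha).differentiableAt one_ne_zero)
      ((sc0 a ha).differentiableAt one_ne_zero) ((sc1 a ha).differentiableAt one_ne_zero)
      ((sc2 a ha).differentiableAt one_ne_zero) db3 dc0 dc1 dc2
  exact ⟨hΨ.contDiffAt_rescaledRoot hmem hcoeffs, hΨ.cubic_rescaledRoot_eq_zero hmem,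
    hΨ.abs_rescaledRoot_add_cbrt_le he he1 hc1M hc2M hmem, hΨ.le_abs_rescaledRoot he hmem,
    (hΨ.abs_rescaledRoot_le he hmem).trans (by gcongr; exact le_max_left _ _),
    (hΨ.norm_fderiv_rescaledRoot_le he hmem (hcoeffs.differentiableAt one_ne_zero) hfderiv).trans
      (by gcongr; exact le_max_right _ _)⟩

end IsUniformRootBranch

end Rescaling

theorem cubic_root_order_one_third_general {E : Type*} [NormedAddCommGroup E] [NormedSpace ℝ E]
    (c c' M : ℝ) (hc : 0 < c) (hc' : 0 < c') (hM : 0 < M) :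
    ∃ ε0star : ℝ, 0 < ε0star ∧ ∃ K c4 c5 : ℝ, 0 < K ∧ 0 < c4 ∧ 0 < c5 ∧
      ∀ (Pa : Set E) (b3 c0 c1 c2 : E → ℝ),
      (∃ U : Set E, IsOpen U ∧ Pa ⊆ U ∧ ContDiffOn ℝ 1 b3 U ∧ ContDiffOn ℝ 1 c0 U ∧
        ContDiffOn ℝ 1 c1 U ∧ ContDiffOn ℝ 1 c2 U) →
      (∀ a ∈ Pa, c ≤ |b3 a|) →
      (∀ a ∈ Pa, c' ≤ |c0 a|) →
      (∀ a ∈ Pa,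
        |b3 a| ≤ M ∧ ‖fderiv ℝ b3 a‖ ≤ M ∧ |c0 a| ≤ M ∧ ‖fderiv ℝ c0 a‖ ≤ M ∧
        |c1 a| ≤ M ∧ ‖fderiv ℝ c1 a‖ ≤ M ∧ |c2 a| ≤ M ∧ ‖fderiv ℝ c2 a‖ ≤ M) →
      ∀ ε0 : ℝ, 0 < ε0 → ε0 ≤ ε0star →
      ∃ w10 : E → ℝ,
        (∃ U : Set E, IsOpen U ∧ Pa ⊆ U ∧ ContDiffOn ℝ 1 w10 U) ∧
        (∀ a ∈ Pa, b3 a * w10 a ^ 3 + ε0 ^ 3 * c2 a * w10 a ^ 2 +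
          ε0 ^ 2 * c1 a * w10 a + ε0 * c0 a = 0) ∧
        (∀ a ∈ Pa, |w10 a + cbrt (ε0 * c0 a / b3 a)| ≤ K * ε0 * ε0 ^ ((1 : ℝ) / 3)) ∧
        (∀ a ∈ Pa, c4 * ε0 ^ ((1 : ℝ) / 3) ≤ |w10 a| ∧ |w10 a| ≤ c5 * ε0 ^ ((1 : ℝ) / 3) ∧
          ‖fderiv ℝ w10 a‖ ≤ c5 * ε0 ^ ((1 : ℝ) / 3)) := by
  obtain ⟨Ψ, η, m, D, hη, hm, hD, hΨ⟩ :=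
    exists_isUniformRootBranch (isCompact_outerCoeffRegion c c' M)
      (fun x hx ↦ abs_pos.1 (hc.trans_le hx.1.1)) fun x hx ↦ abs_pos.1 (hc'.trans_le hx.2.1)
  refine ⟨min 1 (η / M), by positivity, D * M, m, max D (D * M), by positivity, hm, by positivity,
    fun Pa b3 c0 c1 c2 ⟨U, hU, hPaU, sb3, sc0, sc1, sc2⟩ hb3 hc0 hbound ε0 hε0 hε0star ↦ ?_⟩
  have he : 0 ≤ ε0 ^ ((1 : ℝ) / 3) := by positivity
  have he3 : (ε0 ^ ((1 : ℝ) / 3)) ^ 3 = ε0 := rpow_one_third_pow_three hε0.le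
  generalize ε0 ^ ((1 : ℝ) / 3) = e at he he3 ⊢
  subst he3
  have he1 : e ≤ 1 := (pow_le_one_iff_of_nonneg he three_ne_zero).1 (le_min_iff.1 hε0star).1
  have heη : e ^ 3 * M ≤ η := (le_div_iff₀ hM).1 (le_min_iff.1 hε0star).2
  have smooth_at {f : E → ℝ} (hf : ContDiffOn ℝ 1 f U) : ∀ a ∈ Pa, ContDiffAt ℝ 1 f a :=
    fun a ha ↦ hf.contDiffAt (hU.mem_nhds (hPaU ha))
  obtain ⟨w, hw, hcubic, hasymp, hsize⟩ := hΨ.exists_cubic_root he he1 heη (smooth_at sb3)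
    (smooth_at sc0) (smooth_at sc1) (smooth_at sc2) hb3 hc0 hbound
  exact ⟨w, exists_isOpen_contDiffOn_of_contDiffAt (by simp) hw, hcubic, hasymp, hsize⟩

/-- for the real cubic equation
`b3(a) u³ + ε0³ c2(a) u² + ε0² c1(a) u + ε0 c0(a) = 0` with `|b3| ≥ c`, `|c0| ≥ c'`
bounded below and all coefficient norms bounded by `M`, for `ε0` small enough there is
a real root `w10(a)`, continuously differentiable in `a`, with
`w10(a) = −(ε0 c0(a)/b3(a))^{1/3}(1 + O(ε0))`, and in particular
`c4 ε0^{1/3} ≤ |w10(a)| ≤ c5 ε0^{1/3}` and `|‖w10|‖_Π ≤ c5 ε0^{1/3}`. -/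
theorem cubic_root_order_one_third (c c' M : ℝ) (hc : 0 < c) (hc' : 0 < c') (hM : 0 < M)
    (Pa : Set ℝ) (hPaclosed : IsClosed Pa) (hPabdd : Bornology.IsBounded Pa)
    (b3 c0 c1 c2 : ℝ → ℝ)
    -- continuous differentiability in a neighborhood of Pa
    (hreg : ∃ U : Set ℝ, IsOpen U ∧ Pa ⊆ U ∧ ContDiffOn ℝ 1 b3 U ∧ ContDiffOn ℝ 1 c0 U ∧
      ContDiffOn ℝ 1 c1 U ∧ ContDiffOn ℝ 1 c2 U)
    (hb3 : ∀ a ∈ Pa, c ≤ |b3 a|)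
    (hc0 : ∀ a ∈ Pa, c' ≤ |c0 a|)
    (hbound : ∀ a ∈ Pa,
      |b3 a| ≤ M ∧ |deriv b3 a| ≤ M ∧ |c0 a| ≤ M ∧ |deriv c0 a| ≤ M ∧
      |c1 a| ≤ M ∧ |deriv c1 a| ≤ M ∧ |c2 a| ≤ M ∧ |deriv c2 a| ≤ M) :
    ∃ ε0star : ℝ, 0 < ε0star ∧ ∃ K c4 c5 : ℝ, 0 < K ∧ 0 < c4 ∧ 0 < c5 ∧
      ∀ ε0 : ℝ, 0 < ε0 → ε0 ≤ ε0star →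
      ∃ w10 : ℝ → ℝ,
        (∃ U : Set ℝ, IsOpen U ∧ Pa ⊆ U ∧ ContDiffOn ℝ 1 w10 U) ∧
        (∀ a ∈ Pa, b3 a * w10 a ^ 3 + ε0 ^ 3 * c2 a * w10 a ^ 2 +
          ε0 ^ 2 * c1 a * w10 a + ε0 * c0 a = 0) ∧
        -- w10 = −(ε0 c0/b3)^{1/3} (1 + O(ε0))
        (∀ a ∈ Pa, |w10 a + cbrt (ε0 * c0 a / b3 a)| ≤ K * ε0 * ε0 ^ ((1 : ℝ) / 3)) ∧
        (∀ a ∈ Pa, c4 * ε0 ^ ((1 : ℝ) / 3) ≤ |w10 a| ∧ |w10 a| ≤ c5 * ε0 ^ ((1 : ℝ) / 3) ∧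
          |deriv w10 a| ≤ c5 * ε0 ^ ((1 : ℝ) / 3)) := by
  obtain ⟨ε0star, hε0star, K, c4, c5, hK, hc4, hc5, h⟩ :=
    cubic_root_order_one_third_general (E := ℝ) c c' M hc hc' hM
  simp only [← norm_deriv_eq_norm_fderiv, norm_eq_abs] at h
  exact ⟨ε0star, hε0star, K, c4, c5, hK, hc4, hc5, h Pa b3 c0 c1 c2 hreg hb3 hc0 hbound⟩
end

section
/- There exists a constant μ > 0 such that for every a ∈ [1/4, 5/4], every root λ ∈ ℂ of the characteristic equation λ² − aλ + 1 − e^{−τ0(a) λ} = 0 other than λ = 0 and λ = ± i ω0(a) satisfies Re λ ≤ −μ. -/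
open Real Complex

/-- `ω0(a) = √(2 - a²)`. -/
noncomputable def omega0 (a : ℝ) : ℝ := Real.sqrt (2 - a ^ 2)

/-- The critical delay `τ0(a)`. -/
noncomputable def tau0 (a : ℝ) : ℝ :=
  if 1 < a then Real.arcsin (a * omega0 a) / omega0 a
  else (Real.pi - Real.arcsin (a * omega0 a)) / omega0 a

/-!
A root `λ = x + iy ≠ 0` satisfies `∫₀^τ e^{-λs} ds = a - λ`; at `λ = iω` this says that `cos ωs` and
`sin ωs` have integrals `a` and `ω` over `[0, τ]`. A root with `x > 0`, `y ≥ 0` is then impossible: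
if `y ≤ ω`, the bound `e^{-xs} cos ys > cos ωs - (x/ω) sin ωs`, a form of `u cos u < sin u`,
contradicts the real part; if `ω ≤ y ≤ π/τ`, the bound `e^{-xs} sin ys < (y/ω) sin ωs`, from the
concavity of the sine, contradicts the imaginary part; and `y > π/τ ≥ √2` contradicts
`y² ≤ |λ(λ - a)| = |e^{-τλ} - 1| ≤ 2`.

On the imaginary axis the modulus equation leaves only `0` and `±iω`, and these roots are simple.
Hence they stay isolated from the other roots as the parameters vary, so over a compact parameter
set the other roots with `Re λ ≥ -1` form a compact set, on which `Re λ` attains a negative maximum.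
-/

section RealInequalities

lemma mul_cos_lt_sin {u : ℝ} (hu : 0 < u) (huπ : u < π) : u * Real.cos u < Real.sin u := by
  rcases lt_or_ge u (π / 2) with hlt | hge
  · have hcos : 0 < Real.cos u := Real.cos_pos_of_mem_Ioo ⟨by linarith, hlt⟩
    rw [← lt_div_iff₀ hcos, ← Real.tan_eq_sin_div_cos]
    exact Real.lt_tan hu hlt
  · have hcos : Real.cos u ≤ 0 := Real.cos_nonpos_of_pi_div_two_le_of_le hge (by linarith)
    exact (mul_nonpos_of_nonneg_of_nonpos hu.le hcos).trans_lt (Real.sin_pos_of_pos_of_lt_pi hu huπ)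

lemma mul_sin_le_sin_mul {t v : ℝ} (ht₀ : 0 ≤ t) (ht₁ : t ≤ 1) (hv₀ : 0 ≤ v) (hvπ : v ≤ π) :
    t * Real.sin v ≤ Real.sin (t * v) := by
  simpa using strictConcaveOn_sin_Icc.concaveOn.2 (Set.mem_Icc.mpr ⟨hv₀, hvπ⟩)
    (Set.left_mem_Icc.mpr Real.pi_pos.le) ht₀ (sub_nonneg.mpr ht₁) (add_sub_cancel t 1)

lemma one_sub_exp_mul_cos_lt {x ω s : ℝ} (hx : 0 < x) (hω : 0 < ω) (hs : 0 < s)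
    (hωs : ω * s < π) :
    (1 - Real.exp (-(x * s))) * Real.cos (ω * s) < x / ω * Real.sin (ω * s) := by
  have hθ : 0 < ω * s := mul_pos hω hs
  rcases le_total 0 (Real.cos (ω * s)) with hcos | hcos
  · calc (1 - Real.exp (-(x * s))) * Real.cos (ω * s)
        ≤ x * s * Real.cos (ω * s) :=
          mul_le_mul_of_nonneg_right (by linarith [Real.add_one_le_exp (-(x * s))]) hcos
      _ = x / ω * (ω * s * Real.cos (ω * s)) := by field_simp
      _ < x / ω * Real.sin (ω * s) :=
          mul_lt_mul_of_pos_left (mul_cos_lt_sin hθ hωs) (div_pos hx hω)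
  · have hexp : Real.exp (-(x * s)) ≤ 1 := Real.exp_le_one_iff.mpr (by nlinarith)
    calc (1 - Real.exp (-(x * s))) * Real.cos (ω * s)
        ≤ 0 := mul_nonpos_of_nonneg_of_nonpos (sub_nonneg.mpr hexp) hcos
      _ < x / ω * Real.sin (ω * s) :=
          mul_pos (div_pos hx hω) (Real.sin_pos_of_pos_of_lt_pi hθ hωs)

lemma exp_mul_sin_lt {x ω y s : ℝ} (hx : 0 < x) (hω : 0 < ω) (hωy : ω ≤ y) (hs : 0 < s)
    (hys : y * s < π) :
    Real.exp (-(x * s)) * Real.sin (y * s) < y / ω * Real.sin (ω * s) := by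
  have hy : 0 < y := hω.trans_le hωy
  have hθ : 0 < y * s := mul_pos hy hs
  have hexp : Real.exp (-(x * s)) < 1 := Real.exp_lt_one_iff.mpr (neg_lt_zero.mpr (mul_pos hx hs))
  calc Real.exp (-(x * s)) * Real.sin (y * s)
      < Real.sin (y * s) := mul_lt_of_lt_one_left (Real.sin_pos_of_pos_of_lt_pi hθ hys) hexp
    _ = y / ω * (ω / y * Real.sin (y * s)) := by field_simp
    _ ≤ y / ω * Real.sin (ω / y * (y * s)) := by
        gcongr
        exact mul_sin_le_sin_mul (by positivity) ((div_le_one hy).mpr hωy) hθ.le hys.le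
    _ = y / ω * Real.sin (ω * s) := by rw [← mul_assoc, div_mul_cancel₀ _ hy.ne']

lemma intervalIntegral_lt_of_lt_on_Ioo {f g : ℝ → ℝ} {b c : ℝ} (hbc : b < c) (hf : Continuous f)
    (hg : Continuous g) (hfg : ∀ s ∈ Set.Ioo b c, f s < g s) :
    ∫ s in b..c, f s < ∫ s in b..c, g s := by
  rw [← sub_pos, ← intervalIntegral.integral_sub (hg.intervalIntegrable b c)
    (hf.intervalIntegrable b c)]
  exact intervalIntegral.intervalIntegral_pos_of_pos_on ((hg.sub hf).intervalIntegrable b c)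
    (fun s hs => sub_pos.mpr (hfg s hs)) hbc

end RealInequalities

section Quasipolynomial

/-- The characteristic quasipolynomial `λ² - aλ + 1 - e^{-τλ}` of the linearized oscillator with
damping parameter `a` and arbitrary delay `τ`. -/
noncomputable def charQuasipoly (a τ : ℝ) (z : ℂ) : ℂ :=
  z ^ 2 - (a : ℂ) * z + 1 - Complex.exp (-(τ : ℂ) * z)

variable {a τ y : ℝ} {z : ℂ}

lemma charQuasipoly_zero (a τ : ℝ) : charQuasipoly a τ 0 = 0 := by
  simp [charQuasipoly]

lemma charQuasipoly_conj (a τ : ℝ) (z : ℂ) :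
    charQuasipoly a τ (starRingEnd ℂ z) = starRingEnd ℂ (charQuasipoly a τ z) := by
  simp [charQuasipoly, ← Complex.exp_conj]

lemma hasDerivAt_charQuasipoly (a τ : ℝ) (z : ℂ) :
    HasDerivAt (charQuasipoly a τ) (2 * z - a + τ * Complex.exp (-(τ : ℂ) * z)) z := by
  have hexp : HasDerivAt (fun z : ℂ => Complex.exp (-(τ : ℂ) * z))
      (Complex.exp (-(τ : ℂ) * z) * -(τ : ℂ)) z := by
    simpa using ((hasDerivAt_id z).const_mul (-(τ : ℂ))).cexp
  refine ((((hasDerivAt_pow 2 z).sub ((hasDerivAt_id z).const_mul (a : ℂ))).add_const 1).sub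
    hexp).congr_deriv ?_
  push_cast
  ring

lemma cexp_neg_mul_I_mul (τ y : ℝ) :
    Complex.exp (-(τ : ℂ) * (Complex.I * y)) =
      Real.cos (τ * y) - Real.sin (τ * y) * Complex.I := by
  have hexponent : -(τ : ℂ) * (Complex.I * y) = -((τ * y : ℝ) : ℂ) * Complex.I := by
    push_cast
    ring
  rw [hexponent, Complex.exp_mul_I, Complex.cos_neg, Complex.sin_neg, neg_mul, ← sub_eq_add_neg,
    Complex.ofReal_cos, Complex.ofReal_sin]

lemma charQuasipoly_I_mul (a τ y : ℝ) :
    charQuasipoly a τ (Complex.I * y) =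
      ⟨1 - y ^ 2 - Real.cos (τ * y), Real.sin (τ * y) - a * y⟩ := by
  rw [charQuasipoly, cexp_neg_mul_I_mul, Complex.mk_eq_add_mul_I]
  push_cast
  linear_combination (y : ℂ) ^ 2 * Complex.I_sq

lemma charQuasipoly_I_mul_eq_zero_iff :
    charQuasipoly a τ (Complex.I * y) = 0 ↔
      Real.sin (τ * y) = a * y ∧ Real.cos (τ * y) = 1 - y ^ 2 := by
  rw [charQuasipoly_I_mul, Complex.ext_iff, Complex.zero_re, Complex.zero_im, sub_eq_zero,
    sub_eq_zero, and_comm, eq_comm (a := 1 - y ^ 2)]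

lemma sq_add_sq_eq_two_of_imaginary_root (hy : y ≠ 0)
    (hroot : charQuasipoly a τ (Complex.I * y) = 0) : a ^ 2 + y ^ 2 = 2 := by
  obtain ⟨hsin, hcos⟩ := charQuasipoly_I_mul_eq_zero_iff.mp hroot
  have hpyth := Real.sin_sq_add_cos_sq (τ * y)
  rw [hsin, hcos] at hpyth
  exact mul_left_cancel₀ (pow_ne_zero 2 hy) (by linear_combination hpyth)

lemma deriv_charQuasipoly_ne_zero_of_imaginary_root (hτa : τ * a ≠ 2) (hy : y ≠ 0)
    (hroot : charQuasipoly a τ (Complex.I * y) = 0) :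
    deriv (charQuasipoly a τ) (Complex.I * y) ≠ 0 := by
  obtain ⟨hsin, -⟩ := charQuasipoly_I_mul_eq_zero_iff.mp hroot
  have hderiv : deriv (charQuasipoly a τ) (Complex.I * y) =
      ⟨τ * Real.cos (τ * y) - a, y * (2 - τ * a)⟩ := by
    rw [(hasDerivAt_charQuasipoly a τ _).deriv, cexp_neg_mul_I_mul, hsin, Complex.mk_eq_add_mul_I]
    push_cast
    ring
  rw [hderiv]
  exact fun h => mul_ne_zero hy (sub_ne_zero.mpr hτa.symm) (congrArg Complex.im h)

lemma integral_cexp_of_root (hz : z ≠ 0) (hroot : charQuasipoly a τ z = 0) :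
    ∫ s in (0 : ℝ)..τ, Complex.exp (-z * s) = a - z := by
  rw [integral_exp_mul_complex (neg_ne_zero.mpr hz), div_eq_iff (neg_ne_zero.mpr hz)]
  rw [charQuasipoly] at hroot
  simp only [Complex.ofReal_zero, mul_zero, Complex.exp_zero, neg_mul, mul_comm z] at hroot ⊢
  linear_combination -hroot

lemma integral_exp_mul_cos_of_root (hz : z ≠ 0) (hroot : charQuasipoly a τ z = 0) :
    ∫ s in (0 : ℝ)..τ, Real.exp (-(z.re * s)) * Real.cos (z.im * s) = a - z.re := by
  have hint : IntervalIntegrable (fun s : ℝ => Complex.exp (-z * s)) MeasureTheory.volume 0 τ :=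
    (by fun_prop : Continuous fun s : ℝ => Complex.exp (-z * s)).intervalIntegrable 0 τ
  have hre := Complex.reCLM.intervalIntegral_comp_comm hint
  rw [integral_cexp_of_root hz hroot] at hre
  simpa [Complex.exp_re] using hre

lemma integral_exp_mul_sin_of_root (hz : z ≠ 0) (hroot : charQuasipoly a τ z = 0) :
    ∫ s in (0 : ℝ)..τ, Real.exp (-(z.re * s)) * Real.sin (z.im * s) = z.im := by
  have hint : IntervalIntegrable (fun s : ℝ => Complex.exp (-z * s)) MeasureTheory.volume 0 τ :=
    (by fun_prop : Continuous fun s : ℝ => Complex.exp (-z * s)).intervalIntegrable 0 τ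
  have him := Complex.imCLM.intervalIntegral_comp_comm hint
  rw [integral_cexp_of_root hz hroot] at him
  simpa [Complex.exp_im] using him

lemma norm_cexp_neg_mul (τ : ℝ) (z : ℂ) :
    ‖Complex.exp (-(τ : ℂ) * z)‖ = Real.exp (-(τ * z.re)) := by
  simp [Complex.norm_exp]

lemma norm_le_of_root (hτ : 0 ≤ τ) (hre : -1 ≤ z.re) (hroot : charQuasipoly a τ z = 0) :
    ‖z‖ ≤ |a| + 1 + Real.exp τ := by
  have hexp : ‖Complex.exp (-(τ : ℂ) * z)‖ ≤ Real.exp τ := by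
    rw [norm_cexp_neg_mul, Real.exp_le_exp]
    nlinarith
  have hsq : ‖z‖ ^ 2 ≤ |a| * ‖z‖ + 1 + Real.exp τ :=
    calc ‖z‖ ^ 2 = ‖(a : ℂ) * z - 1 + Complex.exp (-(τ : ℂ) * z)‖ := by
          rw [← norm_pow]
          congr 1
          linear_combination (norm := (rw [charQuasipoly]; ring)) hroot
      _ ≤ ‖(a : ℂ) * z‖ + ‖(1 : ℂ)‖ + ‖Complex.exp (-(τ : ℂ) * z)‖ :=
          (norm_add_le _ _).trans (add_le_add_left (norm_sub_le _ _) _)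
      _ ≤ |a| * ‖z‖ + 1 + Real.exp τ := by
          rw [norm_mul, Complex.norm_real, Real.norm_eq_abs, norm_one]
          gcongr
  by_contra! hlt
  nlinarith [abs_nonneg a, Real.exp_pos τ]

lemma im_sq_le_two_of_root (hτ : 0 ≤ τ) (hre : 0 ≤ z.re) (hroot : charQuasipoly a τ z = 0) :
    z.im ^ 2 ≤ 2 :=
  calc z.im ^ 2 = |z.im| * |(z - a).im| := by simp [pow_two]
    _ ≤ ‖z‖ * ‖z - a‖ := by
        gcongr
        exacts [Complex.abs_im_le_norm z, Complex.abs_im_le_norm (z - a)]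
    _ = ‖Complex.exp (-(τ : ℂ) * z) - 1‖ := by
        rw [← norm_mul]
        congr 1
        linear_combination (norm := (rw [charQuasipoly]; ring)) hroot
    _ ≤ ‖Complex.exp (-(τ : ℂ) * z)‖ + ‖(1 : ℂ)‖ := norm_sub_le _ _
    _ ≤ 1 + 1 := by
        rw [norm_cexp_neg_mul, norm_one]
        gcongr
        exact Real.exp_le_one_iff.mpr (neg_nonpos.mpr (mul_nonneg hτ hre))
    _ = 2 := one_add_one_eq_two

end Quasipolynomial

section CriticalDelay

/-- `τ` is the critical delay, with crossing frequency `ω`, for the damping parameter `a`: the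
characteristic quasipolynomial vanishes at `iω`, the phase `τω` being taken in `(0, π]`. -/
structure IsCriticalDelay (a τ ω : ℝ) : Prop where
  frequency_pos : 0 < ω
  delay_pos : 0 < τ
  phase_le_pi : τ * ω ≤ π
  isRoot : charQuasipoly a τ (Complex.I * ω) = 0

/-- The roots on the imaginary axis at a critical delay with crossing frequency `ω`. -/
def neutralRoots (ω : ℝ) : Set ℂ := {0, Complex.I * ω, -(Complex.I * ω)}

namespace IsCriticalDelay

variable {a τ ω : ℝ} {w z : ℂ}

lemma sin_phase (h : IsCriticalDelay a τ ω) : Real.sin (τ * ω) = a * ω :=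
  (charQuasipoly_I_mul_eq_zero_iff.mp h.isRoot).1

lemma cos_phase (h : IsCriticalDelay a τ ω) : Real.cos (τ * ω) = 1 - ω ^ 2 :=
  (charQuasipoly_I_mul_eq_zero_iff.mp h.isRoot).2

lemma phase_pos (h : IsCriticalDelay a τ ω) : 0 < τ * ω := mul_pos h.delay_pos h.frequency_pos

lemma frequency_sq (h : IsCriticalDelay a τ ω) : ω ^ 2 = 2 * Real.sin (τ * ω / 2) ^ 2 := by
  have hcos := Real.cos_two_mul (τ * ω / 2)
  rw [mul_div_cancel₀ _ two_ne_zero, h.cos_phase] at hcos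
  linear_combination -hcos - 2 * Real.sin_sq_add_cos_sq (τ * ω / 2)

lemma lt_delay (h : IsCriticalDelay a τ ω) : a < τ := by
  have hsin := Real.sin_lt h.phase_pos
  rw [h.sin_phase] at hsin
  exact lt_of_mul_lt_mul_right hsin h.frequency_pos.le

lemma delay_mul_lt_two (h : IsCriticalDelay a τ ω) : τ * a < 2 := by
  set u := τ * ω / 2 with hu
  have hu₀ : 0 < u := half_pos h.phase_pos
  have huπ : u < π := by linarith [h.phase_le_pi, Real.pi_pos]
  have hsin : a * ω = 2 * Real.sin u * Real.cos u := by
    rw [← h.sin_phase, ← Real.sin_two_mul, hu, mul_div_cancel₀ _ two_ne_zero]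
  refine lt_of_mul_lt_mul_right ?_ (sq_nonneg ω)
  calc τ * a * ω ^ 2 = 4 * Real.sin u * (u * Real.cos u) := by
        linear_combination τ * ω * hsin - 4 * Real.sin u * Real.cos u * hu
    _ < 4 * Real.sin u * Real.sin u :=
        mul_lt_mul_of_pos_left (mul_cos_lt_sin hu₀ huπ)
          (mul_pos four_pos (Real.sin_pos_of_pos_of_lt_pi hu₀ huπ))
    _ = 2 * ω ^ 2 := by rw [h.frequency_sq]; ring

lemma two_mul_delay_sq_le (h : IsCriticalDelay a τ ω) : 2 * τ ^ 2 ≤ π ^ 2 := by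
  have hjordan : τ * ω ≤ π * Real.sin (τ * ω / 2) := by
    have := Real.mul_le_sin (half_pos h.phase_pos).le (by linarith [h.phase_le_pi])
    calc τ * ω = π * (2 / π * (τ * ω / 2)) := by field_simp
      _ ≤ π * Real.sin (τ * ω / 2) := by gcongr
  refine le_of_mul_le_mul_right ?_ (pow_pos h.frequency_pos 2)
  calc 2 * τ ^ 2 * ω ^ 2 = 2 * (τ * ω) ^ 2 := by ring
    _ ≤ 2 * (π * Real.sin (τ * ω / 2)) ^ 2 := by
        gcongr
        exact h.phase_pos.le
    _ = π ^ 2 * ω ^ 2 := by rw [h.frequency_sq]; ring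

lemma I_mul_frequency_ne_zero (h : IsCriticalDelay a τ ω) : Complex.I * (ω : ℂ) ≠ 0 :=
  mul_ne_zero Complex.I_ne_zero (Complex.ofReal_ne_zero.mpr h.frequency_pos.ne')

lemma integral_cos (h : IsCriticalDelay a τ ω) : ∫ s in (0 : ℝ)..τ, Real.cos (ω * s) = a := by
  simpa using integral_exp_mul_cos_of_root h.I_mul_frequency_ne_zero h.isRoot

lemma integral_sin (h : IsCriticalDelay a τ ω) : ∫ s in (0 : ℝ)..τ, Real.sin (ω * s) = ω := by
  simpa using integral_exp_mul_sin_of_root h.I_mul_frequency_ne_zero h.isRoot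

lemma frequency_lt_im_of_root (h : IsCriticalDelay a τ ω) (hre : 0 < z.re) (him : 0 ≤ z.im)
    (hroot : charQuasipoly a τ z = 0) : ω < z.im := by
  by_contra! hle
  have hz : z ≠ 0 := fun hz => hre.ne' (by simp [hz])
  have hlt : ∀ s ∈ Set.Ioo 0 τ, Real.cos (ω * s) - z.re / ω * Real.sin (ω * s) <
      Real.exp (-(z.re * s)) * Real.cos (z.im * s) := by
    rintro s ⟨hs, hsτ⟩
    have hωs : ω * s < π := by nlinarith [h.frequency_pos, h.phase_le_pi]
    have hcos : Real.cos (ω * s) ≤ Real.cos (z.im * s) :=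
      Real.cos_le_cos_of_nonneg_of_le_pi (by positivity) hωs.le (by gcongr)
    linarith [one_sub_exp_mul_cos_lt hre h.frequency_pos hs hωs,
      mul_le_mul_of_nonneg_left hcos (Real.exp_pos (-(z.re * s))).le]
  have hint := intervalIntegral_lt_of_lt_on_Ioo h.delay_pos (by fun_prop) (by fun_prop) hlt
  rw [integral_exp_mul_cos_of_root hz hroot, intervalIntegral.integral_sub
    (Continuous.intervalIntegrable (by fun_prop) _ _)
    (Continuous.intervalIntegrable (by fun_prop) _ _), intervalIntegral.integral_const_mul,
    h.integral_cos, h.integral_sin, div_mul_cancel₀ _ h.frequency_pos.ne'] at hint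
  exact hint.false

lemma pi_lt_delay_mul_im_of_root (h : IsCriticalDelay a τ ω) (hre : 0 < z.re) (him : ω ≤ z.im)
    (hroot : charQuasipoly a τ z = 0) : π < τ * z.im := by
  by_contra! hle
  have hz : z ≠ 0 := fun hz => hre.ne' (by simp [hz])
  have hy : 0 < z.im := h.frequency_pos.trans_le him
  have hlt : ∀ s ∈ Set.Ioo 0 τ, Real.exp (-(z.re * s)) * Real.sin (z.im * s) <
      z.im / ω * Real.sin (ω * s) := fun s hs =>
    exp_mul_sin_lt hre h.frequency_pos him hs.1 (by nlinarith [hs.2])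
  have hint := intervalIntegral_lt_of_lt_on_Ioo h.delay_pos (by fun_prop) (by fun_prop) hlt
  rw [integral_exp_mul_sin_of_root hz hroot, intervalIntegral.integral_const_mul,
    h.integral_sin, div_mul_cancel₀ _ h.frequency_pos.ne'] at hint
  exact hint.false

lemma charQuasipoly_ne_zero_of_re_pos (h : IsCriticalDelay a τ ω) (hre : 0 < z.re) :
    charQuasipoly a τ z ≠ 0 := by
  wlog him : 0 ≤ z.im generalizing z with upper
  · intro hroot
    refine upper (z := starRingEnd ℂ z) (by simpa using hre) (by simpa using (not_le.mp him).le) ?_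
    rw [charQuasipoly_conj, hroot, map_zero]
  intro hroot
  have hω := h.frequency_lt_im_of_root hre him hroot
  have hπ := h.pi_lt_delay_mul_im_of_root hre hω.le hroot
  have : π ^ 2 < π ^ 2 :=
    calc π ^ 2 < (τ * z.im) ^ 2 := by gcongr
      _ = τ ^ 2 * z.im ^ 2 := mul_pow _ _ _
      _ ≤ τ ^ 2 * 2 := by gcongr; exact im_sq_le_two_of_root h.delay_pos.le hre.le hroot
      _ ≤ π ^ 2 := by linarith [h.two_mul_delay_sq_le]
  exact this.false

lemma mem_neutralRoots_of_re_nonneg (h : IsCriticalDelay a τ ω) (hre : 0 ≤ z.re)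
    (hroot : charQuasipoly a τ z = 0) : z ∈ neutralRoots ω := by
  have hz : z = Complex.I * z.im := by
    have : z.re = 0 := hre.eq_of_not_lt' fun hpos => h.charQuasipoly_ne_zero_of_re_pos hpos hroot
    apply Complex.ext <;> simp [this]
  rw [hz] at hroot ⊢
  rcases eq_or_ne z.im 0 with him | him
  · simp [neutralRoots, him]
  · have hsq : z.im ^ 2 = ω ^ 2 := by
      linarith [sq_add_sq_eq_two_of_imaginary_root him hroot,
        sq_add_sq_eq_two_of_imaginary_root h.frequency_pos.ne' h.isRoot]
    rcases sq_eq_sq_iff_eq_or_eq_neg.mp hsq with him | him <;> simp [neutralRoots, him]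

lemma charQuasipoly_neg_frequency (h : IsCriticalDelay a τ ω) :
    charQuasipoly a τ (-(Complex.I * ω)) = 0 := by
  have := charQuasipoly_conj a τ (Complex.I * ω)
  simpa [h.isRoot] using this

lemma charQuasipoly_eq_zero (h : IsCriticalDelay a τ ω) (hw : w ∈ neutralRoots ω) :
    charQuasipoly a τ w = 0 := by
  rcases hw with rfl | rfl | rfl
  exacts [charQuasipoly_zero a τ, h.isRoot, h.charQuasipoly_neg_frequency]

lemma deriv_charQuasipoly_ne_zero (h : IsCriticalDelay a τ ω) (hw : w ∈ neutralRoots ω) :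
    deriv (charQuasipoly a τ) w ≠ 0 := by
  have hroot := h.charQuasipoly_eq_zero hw
  rcases hw with rfl | rfl | rfl
  · have hne : (τ : ℂ) - a ≠ 0 := sub_ne_zero.mpr (Complex.ofReal_injective.ne h.lt_delay.ne')
    rw [(hasDerivAt_charQuasipoly a τ 0).deriv]
    simpa [neg_add_eq_sub] using hne
  · exact deriv_charQuasipoly_ne_zero_of_imaginary_root h.delay_mul_lt_two.ne
      h.frequency_pos.ne' hroot
  · have hneg : -(Complex.I * (ω : ℂ)) = Complex.I * ((-ω : ℝ) : ℂ) := by simp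
    rw [hneg] at hroot ⊢
    exact deriv_charQuasipoly_ne_zero_of_imaginary_root h.delay_mul_lt_two.ne
      (neg_ne_zero.mpr h.frequency_pos.ne') hroot

end IsCriticalDelay

end CriticalDelay

section Compactness

lemma dslope_eq_zero_iff_ne {𝕜 : Type*} [NontriviallyNormedField 𝕜] {f : 𝕜 → 𝕜} {w z : 𝕜}
    (hf : f z = f w) (hw : deriv f w ≠ 0) : dslope f w z = 0 ↔ z ≠ w := by
  rcases eq_or_ne z w with rfl | hne
  · simpa using hw
  · simp [dslope_of_ne f hne, slope_def_field, hf, hne]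

lemma dslope_charQuasipoly (a τ : ℝ) (w z : ℂ) :
    dslope (charQuasipoly a τ) w z = z + w - a +
      τ * Complex.exp (-(τ : ℂ) * w) * dslope Complex.exp 0 (-(τ : ℂ) * (z - w)) := by
  rcases eq_or_ne z w with rfl | hne
  · rw [dslope_same, (hasDerivAt_charQuasipoly a τ z).deriv]
    simp [two_mul]
  · have hexp : Complex.exp (-(τ : ℂ) * z) =
        Complex.exp (-(τ : ℂ) * w) * Complex.exp (-(τ : ℂ) * (z - w)) := by
      rw [← Complex.exp_add]
      ring_nf
    have hslope := sub_smul_dslope Complex.exp 0 (-(τ : ℂ) * (z - w))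
    rw [sub_zero, smul_eq_mul, Complex.exp_zero] at hslope
    rw [dslope_of_ne _ hne, slope_def_field, div_eq_iff (sub_ne_zero.mpr hne), charQuasipoly,
      charQuasipoly, hexp]
    linear_combination Complex.exp (-(τ : ℂ) * w) * hslope

lemma continuous_dslope_charQuasipoly {X : Type*} [TopologicalSpace X] {a τ : X → ℝ} {w z : X → ℂ}
    (ha : Continuous a) (hτ : Continuous τ) (hw : Continuous w) (hz : Continuous z) :
    Continuous fun x => dslope (charQuasipoly (a x) (τ x)) (w x) (z x) := by
  have hexp : Continuous (dslope Complex.exp 0) := by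
    rw [← continuousOn_univ, continuousOn_dslope Filter.univ_mem]
    exact ⟨Complex.continuous_exp.continuousOn, Complex.differentiableAt_exp⟩
  simp only [dslope_charQuasipoly]
  fun_prop

/-- The pairs of a parameter triple `(a, τ, ω) ∈ C` and a root of `charQuasipoly a τ` other than the
neutral ones. -/
def nonNeutralRoots (C : Set (ℝ × ℝ × ℝ)) : Set ((ℝ × ℝ × ℝ) × ℂ) :=
  {q | q.1 ∈ C ∧ charQuasipoly q.1.1 q.1.2.1 q.2 = 0 ∧ q.2 ∉ neutralRoots q.1.2.2}

variable {C : Set (ℝ × ℝ × ℝ)}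

-- Dividing out the simple neutral roots turns the open condition that a root avoids them into the
-- closed condition that the divided differences vanish.
lemma nonNeutralRoots_eq_dslope (hcrit : ∀ p ∈ C, IsCriticalDelay p.1 p.2.1 p.2.2) :
    nonNeutralRoots C = {q | q.1 ∈ C ∧ charQuasipoly q.1.1 q.1.2.1 q.2 = 0 ∧
      ∀ w ∈ neutralRoots q.1.2.2, dslope (charQuasipoly q.1.1 q.1.2.1) w q.2 = 0} := by
  ext ⟨p, z⟩
  refine and_congr_right fun hp => and_congr_right fun hroot => ?_
  have hslope : ∀ w ∈ neutralRoots p.2.2, dslope (charQuasipoly p.1 p.2.1) w z = 0 ↔ z ≠ w :=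
    fun w hw => dslope_eq_zero_iff_ne (hroot.trans ((hcrit p hp).charQuasipoly_eq_zero hw).symm)
      ((hcrit p hp).deriv_charQuasipoly_ne_zero hw)
  exact ⟨fun hz w hw => (hslope w hw).mpr fun hzw => hz (hzw ▸ hw),
    fun hzero hz => (hslope z hz).mp (hzero z hz) rfl⟩

lemma isClosed_nonNeutralRoots (hC : IsClosed C)
    (hcrit : ∀ p ∈ C, IsCriticalDelay p.1 p.2.1 p.2.2) : IsClosed (nonNeutralRoots C) := by
  rw [nonNeutralRoots_eq_dslope hcrit]
  simp only [neutralRoots, Set.mem_insert_iff, Set.mem_singleton_iff, forall_eq_or_imp, forall_eq]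
  refine (hC.preimage continuous_fst).and ((isClosed_eq ?_ continuous_const).and
    ((isClosed_eq ?_ continuous_const).and
      ((isClosed_eq ?_ continuous_const).and (isClosed_eq ?_ continuous_const))))
  · unfold charQuasipoly
    fun_prop
  all_goals apply continuous_dslope_charQuasipoly <;> fun_prop

lemma isCompact_nonNeutralRoots_inter_re_ge (hC : IsCompact C)
    (hcrit : ∀ p ∈ C, IsCriticalDelay p.1 p.2.1 p.2.2) :
    IsCompact (nonNeutralRoots C ∩ {q | -1 ≤ q.2.re}) := by
  obtain ⟨R, hR⟩ := hC.bddAbove_image (f := fun p => |p.1| + 1 + Real.exp p.2.1)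
    (by fun_prop : Continuous _).continuousOn
  refine (hC.prod (isCompact_closedBall (0 : ℂ) R)).of_isClosed_subset
    ((isClosed_nonNeutralRoots hC.isClosed hcrit).inter
      (isClosed_le continuous_const (Complex.continuous_re.comp continuous_snd))) ?_
  rintro ⟨p, z⟩ ⟨⟨hp, hroot, -⟩, hre⟩
  have hnorm := norm_le_of_root (hcrit p hp).delay_pos.le hre hroot
  exact ⟨hp, mem_closedBall_zero_iff.mpr (hnorm.trans (hR (Set.mem_image_of_mem _ hp)))⟩

theorem exists_spectral_gap_of_isCompact (hC : IsCompact C)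
    (hcrit : ∀ p ∈ C, IsCriticalDelay p.1 p.2.1 p.2.2) :
    ∃ μ : ℝ, 0 < μ ∧ ∀ q ∈ nonNeutralRoots C, q.2.re ≤ -μ := by
  obtain ⟨μ, hμ, hgap⟩ := (isCompact_nonNeutralRoots_inter_re_ge hC hcrit).exists_forall_le'
    (f := fun q => -q.2.re) (a := 0) (by fun_prop) fun q hq => neg_pos.mpr (not_le.mp fun hre =>
      hq.1.2.2 ((hcrit q.1 hq.1.1).mem_neutralRoots_of_re_nonneg hre hq.1.2.1))
  refine ⟨min μ 1, lt_min hμ one_pos, fun q hq => ?_⟩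
  rcases le_total (-1) q.2.re with hre | hre
  · linarith [hgap q ⟨hq, hre⟩, min_le_left μ 1]
  · linarith [min_le_right μ 1]

end Compactness

section VanDerPol

variable {a : ℝ}

lemma continuous_omega0 : Continuous omega0 := by
  unfold omega0
  fun_prop

lemma omega0_sq (ha : a ^ 2 ≤ 2) : omega0 a ^ 2 = 2 - a ^ 2 :=
  Real.sq_sqrt (sub_nonneg.mpr ha)

lemma omega0_pos (ha : a ^ 2 < 2) : 0 < omega0 a :=
  Real.sqrt_pos.mpr (sub_pos.mpr ha)

lemma sqrt_one_sub_sq_eq_mul_omega0 (ha₀ : 0 ≤ a) (ha : a ^ 2 ≤ 2) :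
    √(1 - (a ^ 2 - 1) ^ 2) = a * omega0 a := by
  have hsq : 1 - (a ^ 2 - 1) ^ 2 = (a * omega0 a) ^ 2 := by
    rw [mul_pow, omega0_sq ha]
    ring
  rw [hsq]
  exact Real.sqrt_sq (mul_nonneg ha₀ (Real.sqrt_nonneg _))

-- The two branches of `tau0` are the arcsine expressions of the angle in `[0, π]` with cosine
-- `a² - 1`, which lies below `π / 2` exactly when `1 < a`.
lemma tau0_eq_arccos_div (ha₀ : 0 ≤ a) (ha : a ^ 2 ≤ 2) :
    tau0 a = Real.arccos (a ^ 2 - 1) / omega0 a := by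
  rw [tau0, ← sqrt_one_sub_sq_eq_mul_omega0 ha₀ ha]
  split_ifs with h
  · rw [Real.arccos_eq_arcsin (by nlinarith)]
  · rw [← neg_sub 1 (a ^ 2), neg_sq, Real.arccos_neg, Real.arccos_eq_arcsin (by nlinarith)]

lemma isCriticalDelay_tau0 (ha₀ : 0 ≤ a) (ha : a ^ 2 < 2) :
    IsCriticalDelay a (tau0 a) (omega0 a) := by
  have hω := omega0_pos ha
  have hτ := tau0_eq_arccos_div ha₀ ha.le
  have hphase : tau0 a * omega0 a = Real.arccos (a ^ 2 - 1) := by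
    rw [hτ, div_mul_cancel₀ _ hω.ne']
  refine ⟨hω, ?_, hphase.trans_le (Real.arccos_le_pi _), charQuasipoly_I_mul_eq_zero_iff.mpr ?_⟩
  · rw [hτ]
    exact div_pos (Real.arccos_pos.mpr (by linarith)) hω
  · rw [hphase, Real.sin_arccos, sqrt_one_sub_sq_eq_mul_omega0 ha₀ ha.le, omega0_sq ha.le,
      Real.cos_arccos (by nlinarith) (by linarith)]
    exact ⟨rfl, by ring⟩

lemma continuousOn_tau0 : ContinuousOn tau0 {a | 0 ≤ a ∧ a ^ 2 < 2} := by
  have hquot : ContinuousOn (fun a => Real.arccos (a ^ 2 - 1) / omega0 a)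
      {a | 0 ≤ a ∧ a ^ 2 < 2} :=
    (by fun_prop : Continuous fun a : ℝ => Real.arccos (a ^ 2 - 1)).continuousOn.div
      continuous_omega0.continuousOn fun a ha => (omega0_pos ha.2).ne'
  exact hquot.congr fun a ha => tau0_eq_arccos_div ha.1 ha.2.le

end VanDerPol

theorem characteristic_roots_spectral_gap_general {K : Set ℝ} (hK : IsCompact K)
    (hKsub : K ⊆ Set.Ico 0 √2) :
    ∃ μ : ℝ, 0 < μ ∧ ∀ a ∈ K, ∀ lam : ℂ,
      lam ^ 2 - (a : ℂ) * lam + 1 - Complex.exp (-(tau0 a : ℂ) * lam) = 0 →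
      lam ≠ 0 → lam ≠ Complex.I * (omega0 a : ℂ) → lam ≠ -(Complex.I * (omega0 a : ℂ)) →
      lam.re ≤ -μ := by
  have hrange : ∀ a ∈ K, 0 ≤ a ∧ a ^ 2 < 2 := fun a ha =>
    ⟨(hKsub ha).1, (Real.lt_sqrt (hKsub ha).1).mp (hKsub ha).2⟩
  have hcont : ContinuousOn (fun a => (a, tau0 a, omega0 a)) K :=
    continuousOn_id.prodMk
      ((continuousOn_tau0.mono hrange).prodMk continuous_omega0.continuousOn)
  obtain ⟨μ, hμ, hgap⟩ := exists_spectral_gap_of_isCompact (hK.image_of_continuousOn hcont) <|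
    Set.forall_mem_image.mpr fun a ha => isCriticalDelay_tau0 (hrange a ha).1 (hrange a ha).2
  refine ⟨μ, hμ, fun a ha lam hroot h0 hpos hneg => ?_⟩
  exact hgap ((a, tau0 a, omega0 a), lam) ⟨Set.mem_image_of_mem _ ha, hroot,
    fun hmem => hmem.elim h0 fun hmem => hmem.elim hpos hneg⟩

/-- there is `μ > 0` such that for all `a ∈ [1/4, 5/4]`, every root
of the characteristic equation `λ² − aλ + 1 − e^{−τ0(a) λ} = 0` other than `0` and
`± i ω0(a)` has real part `≤ −μ`. -/
theorem characteristic_roots_spectral_gap :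
    ∃ μ : ℝ, 0 < μ ∧ ∀ a ∈ Set.Icc (1 / 4 : ℝ) (5 / 4), ∀ lam : ℂ,
      lam ^ 2 - (a : ℂ) * lam + 1 - Complex.exp (-(tau0 a : ℂ) * lam) = 0 →
      lam ≠ 0 → lam ≠ Complex.I * (omega0 a : ℂ) → lam ≠ -(Complex.I * (omega0 a : ℂ)) →
      lam.re ≤ -μ :=
  characteristic_roots_spectral_gap_general isCompact_Icc fun _ ha =>
    ⟨by linarith [ha.1], ha.2.trans_lt (Real.lt_sqrt_of_sq_lt (by norm_num))⟩
end
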